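/- arXiv:0904.2820 — 3 statements merged into one kernel-verified Lean document; each statement's English description precedes it below -/
import Mathlib

section
/- Fix μ ∈ ℤ. For every ε > 0 there exists a constant C_ε > 0, independent of μ, such that for all dyadic numbers N₁, N₂, N₃ ≥ 1 the set S_μ = {(n₁, n₂, n₃) ∈ ℤ³ : N_j ≤ |n_j| < 2N_j for j = 1,2,3, n₂ ≠ n₁, n₂ ≠ n₃, and 2(n₂ − n₁)(n₂ − n₃) = μ} is finite with cardinality #S_μ ≤ C_ε · (max(N₁,N₂,N₃))^ε · min(N₁,N₂,N₃). -/
/-!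
If `μ ≠ 0`, a solution of `2 (n₂ - n₁) (n₂ - n₃) = μ` is determined by the factorization
`(2 (n₂ - n₁), n₂ - n₃)` of `μ` together with any single one of its coordinates. Choosing the
coordinate with the shortest range leaves `O(min N_j)` possibilities for it, and the divisor bound
leaves `O_ε(|μ| ^ (ε / 2)) = O_ε((max N_j) ^ ε)` factorizations, as `|μ| ≤ 32 (max N_j) ^ 2`.

For the divisor bound, Bernoulli's inequality gives `a + 1 ≤ max 1 (p ^ ε - 1)⁻¹ * (p ^ ε) ^ a`
for each prime power `p ^ a` dividing `n` exactly, and the first factor is `1` for all but finitely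
many `p`, independently of `n`.
-/

open Finset

section DivisorBound

theorem natCast_add_one_le_max_mul_pow {y : ℝ} (hy : 1 < y) (a : ℕ) :
    (a + 1 : ℝ) ≤ max 1 (y - 1)⁻¹ * y ^ a := by
  have hscale : 1 ≤ max 1 (y - 1)⁻¹ * (y - 1) := by
    rw [← inv_le_iff_one_le_mul₀ (sub_pos.mpr hy)]
    exact le_max_right _ _
  calc (a + 1 : ℝ) ≤ max 1 (y - 1)⁻¹ * 1 + a * (max 1 (y - 1)⁻¹ * (y - 1)) := by
        rw [add_comm, mul_one]
        gcongr
        · exact le_max_left _ _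
        · exact le_mul_of_one_le_right a.cast_nonneg hscale
    _ = max 1 (y - 1)⁻¹ * (1 + a * (y - 1)) := by ring
    _ ≤ max 1 (y - 1)⁻¹ * y ^ a := by
        gcongr
        exact one_add_mul_sub_le_pow (by linarith) a

variable {ε : ℝ}

theorem card_divisors_le_prod_mul_rpow (hε : 0 < ε) {n : ℕ} (hn : n ≠ 0) :
    (#n.divisors : ℝ) ≤ (∏ p ∈ n.primeFactors, max 1 ((p : ℝ) ^ ε - 1)⁻¹) * (n : ℝ) ^ ε := by
  have hfactor : ∏ p ∈ n.primeFactors, (p : ℝ) ^ n.factorization p = n := by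
    exact_mod_cast Nat.prod_factorization_pow_eq_self hn
  rw [Nat.card_divisors hn, Nat.cast_prod]
  calc ∏ p ∈ n.primeFactors, ((n.factorization p + 1 : ℕ) : ℝ)
      ≤ ∏ p ∈ n.primeFactors,
          max 1 ((p : ℝ) ^ ε - 1)⁻¹ * ((p : ℝ) ^ n.factorization p) ^ ε := by
        refine prod_le_prod (fun _ _ ↦ by positivity) fun p hp ↦ ?_
        have hp₁ : (1 : ℝ) < p := by exact_mod_cast (Nat.prime_of_mem_primeFactors hp).one_lt
        rw [← Real.rpow_pow_comm p.cast_nonneg]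
        exact_mod_cast natCast_add_one_le_max_mul_pow (Real.one_lt_rpow hp₁ hε) _
    _ = (∏ p ∈ n.primeFactors, max 1 ((p : ℝ) ^ ε - 1)⁻¹) * (n : ℝ) ^ ε := by
        rw [prod_mul_distrib, Real.finsetProd_rpow _ _ (fun _ _ ↦ by positivity), hfactor]

theorem prod_max_one_inv_rpow_sub_one_le (hε : 0 < ε) {s : Finset ℕ} (hs : ∀ p ∈ s, 2 ≤ p) :
    ∏ p ∈ s, max 1 ((p : ℝ) ^ ε - 1)⁻¹ ≤
      max 1 ((2 : ℝ) ^ ε - 1)⁻¹ ^ ⌈(2 : ℝ) ^ ε⁻¹⌉₊ := by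
  set M : ℕ := ⌈(2 : ℝ) ^ ε⁻¹⌉₊
  have hlarge (p : ℕ) (hp : M ≤ p) : max 1 ((p : ℝ) ^ ε - 1)⁻¹ = 1 := by
    have h2p : (2 : ℝ) ≤ (p : ℝ) ^ ε :=
      (Real.rpow_inv_le_iff_of_pos two_pos.le p.cast_nonneg hε).mp (Nat.ceil_le.mp hp)
    exact max_eq_left (inv_le_one_of_one_le₀ (by linarith))
  have hsmall (p : ℕ) (hp : 2 ≤ p) :
      max 1 ((p : ℝ) ^ ε - 1)⁻¹ ≤ max 1 ((2 : ℝ) ^ ε - 1)⁻¹ := by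
    have h2ε : (0 : ℝ) < 2 ^ ε - 1 := sub_pos.mpr (Real.one_lt_rpow one_lt_two hε)
    gcongr
    exact_mod_cast hp
  have hcard : #{p ∈ s | p < M} ≤ M :=
    (card_le_card fun p hp ↦ mem_range.mpr (mem_filter.mp hp).2).trans_eq (card_range M)
  calc ∏ p ∈ s, max 1 ((p : ℝ) ^ ε - 1)⁻¹
      = ∏ p ∈ s with p < M, max 1 ((p : ℝ) ^ ε - 1)⁻¹ :=
        (prod_filter_of_ne fun p _ hne ↦ not_le.mp fun hp ↦ hne (hlarge p hp)).symm
    _ ≤ ∏ p ∈ s with p < M, max 1 ((2 : ℝ) ^ ε - 1)⁻¹ :=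
        prod_le_prod (fun _ _ ↦ by positivity) fun p hp ↦ hsmall p (hs p (mem_filter.mp hp).1)
    _ = max 1 ((2 : ℝ) ^ ε - 1)⁻¹ ^ #{p ∈ s | p < M} := prod_const _
    _ ≤ max 1 ((2 : ℝ) ^ ε - 1)⁻¹ ^ M := pow_le_pow_right₀ (le_max_left _ _) hcard

theorem exists_card_divisors_le_mul_rpow (hε : 0 < ε) :
    ∃ C : ℝ, 0 < C ∧ ∀ n : ℕ, n ≠ 0 → (#n.divisors : ℝ) ≤ C * (n : ℝ) ^ ε := by
  refine ⟨max 1 ((2 : ℝ) ^ ε - 1)⁻¹ ^ ⌈(2 : ℝ) ^ ε⁻¹⌉₊, by positivity, fun n hn ↦ ?_⟩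
  refine (card_divisors_le_prod_mul_rpow hε hn).trans ?_
  gcongr
  exact prod_max_one_inv_rpow_sub_one_le hε fun p hp ↦ (Nat.prime_of_mem_primeFactors hp).two_le

theorem card_int_divisorsAntidiag (z : ℤ) : #z.divisorsAntidiag = 2 * #z.natAbs.divisors := by
  have hnat (n : ℕ) : #n.divisorsAntidiagonal = #n.divisors := by
    rw [← Nat.map_div_right_divisors, card_map]
  rcases z with n | n <;>
    simp only [Int.divisorsAntidiag, card_disjUnion, card_map, hnat, two_mul, Int.ofNat_eq_natCast,
      Int.natAbs_natCast, Int.natAbs_negSucc, Nat.succ_eq_add_one]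

end DivisorBound

section IntegersInInterval

/-- The integers `x` with `|x| ≤ R`, for a real radius `R`. -/
noncomputable def intBall (R : ℝ) : Finset ℤ := Icc (-⌊R⌋) ⌊R⌋

variable {R : ℝ}

theorem mem_intBall {x : ℤ} : x ∈ intBall R ↔ |(x : ℝ)| ≤ R := by
  rw [intBall, mem_Icc, ← abs_le, Int.le_floor, Int.cast_abs]

theorem card_intBall_le (hR : 1 ≤ R) : (#(intBall R) : ℝ) ≤ 3 * R := by
  have hfloor : 0 ≤ ⌊R⌋ := Int.floor_nonneg.mpr (by linarith)
  have hcard : (#(intBall R) : ℤ) = 2 * ⌊R⌋ + 1 := by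
    rw [intBall, Int.card_Icc, Int.toNat_of_nonneg (by linarith)]
    ring
  have hcard' : (#(intBall R) : ℝ) = 2 * ⌊R⌋ + 1 := by exact_mod_cast hcard
  linarith [Int.floor_le R]

end IntegersInInterval

section ResonantTriples

/-- The triples `(n₁, n₂, n₃) ∈ A₁ × A₂ × A₃` with `n₂ ≠ n₁, n₃` at which the resonance function
`2 (n₂ - n₁) (n₂ - n₃)` takes the value `μ`: the set to be counted, for arbitrary finite ranges
of the coordinates. -/
def resonantTriples (A₁ A₂ A₃ : Finset ℤ) (μ : ℤ) : Finset (ℤ × ℤ × ℤ) :=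
  {p ∈ A₁ ×ˢ A₂ ×ˢ A₃ | p.2.1 ≠ p.1 ∧ p.2.1 ≠ p.2.2 ∧ 2 * (p.2.1 - p.1) * (p.2.1 - p.2.2) = μ}

/-- The two factors `2 (n₂ - n₁)` and `n₂ - n₃` of the resonance function at `(n₁, n₂, n₃)`. -/
def resonanceFactors (p : ℤ × ℤ × ℤ) : ℤ × ℤ := (2 * (p.2.1 - p.1), p.2.1 - p.2.2)

variable {A₁ A₂ A₃ : Finset ℤ} {μ : ℤ} {p : ℤ × ℤ × ℤ}

theorem mem_resonantTriples :
    p ∈ resonantTriples A₁ A₂ A₃ μ ↔ p.1 ∈ A₁ ∧ p.2.1 ∈ A₂ ∧ p.2.2 ∈ A₃ ∧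
      p.2.1 ≠ p.1 ∧ p.2.1 ≠ p.2.2 ∧ 2 * (p.2.1 - p.1) * (p.2.1 - p.2.2) = μ := by
  simp only [resonantTriples, mem_filter, mem_product, and_assoc]

theorem resonanceFactors_mem_divisorsAntidiag (hp : p ∈ resonantTriples A₁ A₂ A₃ μ) :
    resonanceFactors p ∈ μ.divisorsAntidiag := by
  obtain ⟨-, -, -, h₂₁, h₂₃, rfl⟩ := mem_resonantTriples.mp hp
  exact Int.mem_divisorsAntidiag.mpr ⟨rfl,
    mul_ne_zero (mul_ne_zero two_ne_zero (sub_ne_zero.mpr h₂₁)) (sub_ne_zero.mpr h₂₃)⟩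

theorem card_resonantTriples_le_of_injective {A : Finset ℤ} (x : ℤ × ℤ × ℤ → ℤ)
    (hx : ∀ p ∈ resonantTriples A₁ A₂ A₃ μ, x p ∈ A)
    (hinj : Function.Injective fun p ↦ (x p, resonanceFactors p)) :
    #(resonantTriples A₁ A₂ A₃ μ) ≤ #A * #μ.divisorsAntidiag := by
  rw [← card_product]
  exact card_le_card_of_injOn _
    (fun p hp ↦ mem_product.mpr ⟨hx p hp, resonanceFactors_mem_divisorsAntidiag hp⟩) hinj.injOn

theorem card_resonantTriples_le (A₁ A₂ A₃ : Finset ℤ) (μ : ℤ) :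
    #(resonantTriples A₁ A₂ A₃ μ) ≤ min #A₁ (min #A₂ #A₃) * #μ.divisorsAntidiag := by
  rw [← Nat.mul_min_mul_right, ← Nat.mul_min_mul_right]
  refine le_min
    (card_resonantTriples_le_of_injective (·.1) (fun p hp ↦ (mem_resonantTriples.mp hp).1) ?_)
    (le_min
      (card_resonantTriples_le_of_injective (·.2.1)
        (fun p hp ↦ (mem_resonantTriples.mp hp).2.1) ?_)
      (card_resonantTriples_le_of_injective (·.2.2)
        (fun p hp ↦ (mem_resonantTriples.mp hp).2.2.1) ?_)) <;>
  · rintro ⟨a, b, c⟩ ⟨x, y, z⟩ h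
    simp only [resonanceFactors, Prod.mk.injEq] at h ⊢
    lia

variable {R₁ R₂ R₃ : ℝ}

theorem natAbs_le_of_mem_resonantTriples_intBall
    (hp : p ∈ resonantTriples (intBall R₁) (intBall R₂) (intBall R₃) μ) :
    (μ.natAbs : ℝ) ≤ 8 * max R₁ (max R₂ R₃) ^ 2 := by
  simp only [mem_resonantTriples, mem_intBall] at hp
  obtain ⟨h₁, h₂, h₃, -, -, rfl⟩ := hp
  set R := max R₁ (max R₂ R₃)
  have hR₁ : R₁ ≤ R := le_max_left _ _
  have hR₂ : R₂ ≤ R := (le_max_left _ _).trans (le_max_right _ _)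
  have hR₃ : R₃ ≤ R := (le_max_right _ _).trans (le_max_right _ _)
  have h₂₁ : |(p.2.1 : ℝ) - p.1| ≤ 2 * R := by linarith [abs_sub (p.2.1 : ℝ) p.1]
  have h₂₃ : |(p.2.1 : ℝ) - p.2.2| ≤ 2 * R := by linarith [abs_sub (p.2.1 : ℝ) p.2.2]
  rw [Nat.cast_natAbs]
  push_cast
  rw [abs_mul, abs_mul, abs_two]
  calc 2 * |(p.2.1 : ℝ) - p.1| * |(p.2.1 : ℝ) - p.2.2| ≤ 2 * (2 * R) * (2 * R) := by
        gcongr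
        linarith [abs_nonneg (p.1 : ℝ)]
    _ = 8 * R ^ 2 := by ring

theorem coe_resonantTriples_intBall (R₁ R₂ R₃ : ℝ) (μ : ℤ) :
    (resonantTriples (intBall R₁) (intBall R₂) (intBall R₃) μ : Set (ℤ × ℤ × ℤ)) =
      {p | |(p.1 : ℝ)| ≤ R₁ ∧ |(p.2.1 : ℝ)| ≤ R₂ ∧ |(p.2.2 : ℝ)| ≤ R₃ ∧
        p.2.1 ≠ p.1 ∧ p.2.1 ≠ p.2.2 ∧ 2 * (p.2.1 - p.1) * (p.2.1 - p.2.2) = μ} := by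
  ext p
  simp only [mem_coe, mem_resonantTriples, mem_intBall, Set.mem_ofPred_eq]

theorem exists_card_resonantTriples_intBall_le {ε : ℝ} (hε : 0 < ε) :
    ∃ C : ℝ, 0 < C ∧ ∀ (μ : ℤ) (R₁ R₂ R₃ : ℝ), 1 ≤ R₁ → 1 ≤ R₂ → 1 ≤ R₃ →
      (#(resonantTriples (intBall R₁) (intBall R₂) (intBall R₃) μ) : ℝ) ≤
        C * max R₁ (max R₂ R₃) ^ ε * min R₁ (min R₂ R₃) := by
  obtain ⟨D, hD, hdivisors⟩ := exists_card_divisors_le_mul_rpow (half_pos hε)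
  refine ⟨6 * D * 8 ^ (ε / 2), by positivity, fun μ R₁ R₂ R₃ hR₁ hR₂ hR₃ ↦ ?_⟩
  set T := resonantTriples (intBall R₁) (intBall R₂) (intBall R₃) μ
  set R := max R₁ (max R₂ R₃)
  have hR0 : 0 ≤ R := zero_le_one.trans (hR₁.trans (le_max_left _ _))
  rcases T.eq_empty_or_nonempty with hempty | ⟨p, hp⟩
  · rw [hempty, card_empty, Nat.cast_zero]
    positivity
  have hμ : μ ≠ 0 := (Int.mem_divisorsAntidiag.mp (resonanceFactors_mem_divisorsAntidiag hp)).2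
  have hfactorizations : (#μ.divisorsAntidiag : ℝ) ≤ 2 * (D * (8 ^ (ε / 2) * R ^ ε)) := by
    have hpow : (8 * R ^ 2) ^ (ε / 2) = 8 ^ (ε / 2) * R ^ ε := by
      rw [Real.mul_rpow (by positivity) (by positivity), ← Real.rpow_natCast_mul hR0,
        Nat.cast_ofNat, mul_div_cancel₀ _ two_ne_zero]
    rw [card_int_divisorsAntidiag, Nat.cast_mul, Nat.cast_ofNat, ← hpow]
    gcongr
    refine (hdivisors _ (Int.natAbs_ne_zero.mpr hμ)).trans ?_
    gcongr
    exact natAbs_le_of_mem_resonantTriples_intBall hp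
  have hcoordinate : (min #(intBall R₁) (min #(intBall R₂) #(intBall R₃)) : ℕ) ≤
      3 * min R₁ (min R₂ R₃) := by
    rw [Nat.cast_min, Nat.cast_min, mul_min_of_nonneg _ _ zero_le_three,
      mul_min_of_nonneg _ _ zero_le_three]
    gcongr <;> exact card_intBall_le ‹_›
  calc (#T : ℝ)
      ≤ (min #(intBall R₁) (min #(intBall R₂) #(intBall R₃)) : ℕ) * #μ.divisorsAntidiag := by
        exact_mod_cast card_resonantTriples_le _ _ _ _
    _ ≤ 3 * min R₁ (min R₂ R₃) * (2 * (D * (8 ^ (ε / 2) * R ^ ε))) := by gcongr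
    _ = 6 * D * 8 ^ (ε / 2) * R ^ ε * min R₁ (min R₂ R₃) := by ring

end ResonantTriples

theorem stmt_0_general {ε : ℝ} (hε : 0 < ε) :
    ∃ C : ℝ, 0 < C ∧ ∀ (μ : ℤ) (N₁ N₂ N₃ : ℝ), 1 ≤ N₁ → 1 ≤ N₂ → 1 ≤ N₃ →
      letI S : Set (ℤ × ℤ × ℤ) :=
        {p | |(p.1 : ℝ)| ≤ 2 * N₁ ∧ |(p.2.1 : ℝ)| ≤ 2 * N₂ ∧ |(p.2.2 : ℝ)| ≤ 2 * N₃ ∧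
          p.2.1 ≠ p.1 ∧ p.2.1 ≠ p.2.2 ∧ 2 * (p.2.1 - p.1) * (p.2.1 - p.2.2) = μ}
      S.Finite ∧ (S.ncard : ℝ) ≤ C * max N₁ (max N₂ N₃) ^ ε * min N₁ (min N₂ N₃) := by
  obtain ⟨C, hC, hcard⟩ := exists_card_resonantTriples_intBall_le hε
  refine ⟨C * 2 ^ ε * 2, by positivity, fun μ N₁ N₂ N₃ hN₁ hN₂ hN₃ ↦ ?_⟩
  rw [← coe_resonantTriples_intBall, Set.ncard_coe_finset]
  refine ⟨finite_toSet _, (hcard μ _ _ _ (by linarith) (by linarith) (by linarith)).trans_eq ?_⟩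
  rw [← mul_max_of_nonneg _ _ zero_le_two, ← mul_max_of_nonneg _ _ zero_le_two,
    ← mul_min_of_nonneg _ _ zero_le_two, ← mul_min_of_nonneg _ _ zero_le_two,
    Real.mul_rpow zero_le_two (by positivity)]
  ring

/-- Counting lemma: for fixed `μ`, the number of integer triples `(n₁, n₂, n₃)` with
`|n_j| ∈ [N_j, 2N_j)` for dyadic `N_j = 2^{k_j}`, `n₂ ≠ n₁, n₃` and
`2(n₂ - n₁)(n₂ - n₃) = μ` is `O_ε((N^1)^ε N^3)`, where `N^1` (resp. `N^3`) is the
largest (resp. smallest) of the `N_j`, with a constant independent of `μ`. -/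
theorem stmt_0 :
    ∀ ε : ℝ, 0 < ε → ∃ C : ℝ, 0 < C ∧
      ∀ (μ : ℤ) (k₁ k₂ k₃ : ℕ),
        letI N₁ : ℝ := 2 ^ k₁
        letI N₂ : ℝ := 2 ^ k₂
        letI N₃ : ℝ := 2 ^ k₃
        letI S : Set (ℤ × ℤ × ℤ) :=
          {p | (N₁ ≤ (|p.1| : ℤ) ∧ ((|p.1| : ℤ) : ℝ) < 2 * N₁) ∧
               (N₂ ≤ (|p.2.1| : ℤ) ∧ ((|p.2.1| : ℤ) : ℝ) < 2 * N₂) ∧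
               (N₃ ≤ (|p.2.2| : ℤ) ∧ ((|p.2.2| : ℤ) : ℝ) < 2 * N₃) ∧
               p.2.1 ≠ p.1 ∧ p.2.1 ≠ p.2.2 ∧
               2 * (p.2.1 - p.1) * (p.2.1 - p.2.2) = μ}
        S.Finite ∧ (S.ncard : ℝ) ≤ C * (max N₁ (max N₂ N₃)) ^ ε * min N₁ (min N₂ N₃) := by
  intro ε hε
  obtain ⟨C, hC, hbound⟩ := stmt_0_general hε
  refine ⟨C, hC, fun μ k₁ k₂ k₃ ↦ ?_⟩
  obtain ⟨hfinite, hcard⟩ := hbound μ (2 ^ k₁) (2 ^ k₂) (2 ^ k₃)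
    (one_le_pow₀ one_le_two) (one_le_pow₀ one_le_two) (one_le_pow₀ one_le_two)
  refine ⟨hfinite.subset ?_, (Nat.cast_le.mpr (Set.ncard_le_ncard ?_ hfinite)).trans hcard⟩ <;>
  · rintro p ⟨⟨-, h₁⟩, ⟨-, h₂⟩, ⟨-, h₃⟩, hp⟩
    rw [Int.cast_abs] at h₁ h₂ h₃
    exact ⟨h₁.le, h₂.le, h₃.le, hp⟩
end

section
/- For every b with 0 ≤ b < 1/2 there exists a constant C > 0 such that for every interval [a₁, a₂] ⊂ ℝ and every Schwartz function f : ℝ → ℂ, ∫_ℝ (1 + |τ|)^{2b} | 𝓕(χ_{[a₁,a₂]} · f)(τ) |² dτ ≤ C ∫_ℝ (1 + |τ|)^{2b} | 𝓕 f (τ) |² dτ, where the constant C depends only on b (in particular it is uniform in a₁ and a₂). -/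
open MeasureTheory
open scoped FourierTransform ENNReal NNReal SchwartzMap InnerProductSpace

/-!
By Plancherel, the weight `|ξ| ^ s` on the Fourier side corresponds to the Gagliardo energy
`∫∫ |f (x + h) - f x|² h ^ (-1 - s) dx dh`, where `s = 2 * b`. Cutting `f` off to an upper set `U`
changes its increments of length `h` only across the endpoint of `U`, which costs the mass `A h` of
`|f|²` on the boundary layer of `U` of width `h`. The layer of width `2 * h` consists of the layer
of width `h` and its translate, so `A (2 * h)` is at least `(2 - ε) * A h` up to increments of `f`,
whereas scaling gives `∫ A (2 * h) h ^ (-1 - s) dh = 2 ^ s * ∫ A h h ^ (-1 - s) dh`. As `2 ^ s < 2`,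
this bounds `∫ A h h ^ (-1 - s) dh` by the energy. An interval is the intersection of an upper set
and a lower set.
-/

section Plancherel

variable {V E : Type*} [NormedAddCommGroup V] [InnerProductSpace ℝ V] [MeasurableSpace V]
  [BorelSpace V] [NormedAddCommGroup E]

theorem lintegral_enorm_sq_eq_eLpNorm_sq {α : Type*} [MeasurableSpace α] (μ : Measure α)
    (f : α → E) : ∫⁻ x, ‖f x‖ₑ ^ 2 ∂μ = eLpNorm f 2 μ ^ 2 := by
  simpa using (eLpNorm_nnreal_pow_eq_lintegral (f := f) (μ := μ) (p := 2) two_ne_zero).symm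

theorem continuous_fourier [NormedSpace ℂ E] [FiniteDimensional ℝ V] {f : V → E}
    (hf : Integrable f) : Continuous (𝓕 f) :=
  VectorFourier.fourierIntegral_continuous Real.continuous_fourierChar
    (L := innerₗ V) continuous_inner hf

theorem fourier_comp_add_right_sub [NormedSpace ℂ E] [FiniteDimensional ℝ V] {f : V → E}
    (hf : Integrable f) (v w : V) :
    𝓕 (fun x => f (x + v) - f x) w = ((𝐞 ⟪v, w⟫_ℝ : ℂ) - 1) • 𝓕 f w := by
  have hadd := congrFun (VectorFourier.fourierIntegral_add Real.continuous_fourierChar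
    (L := innerₗ V) continuous_inner ((hf.comp_add_right v).sub hf) hf) w
  have hshift := congrFun (VectorFourier.fourierIntegral_comp_add_right 𝐞 volume (innerₗ V) f v) w
  rw [sub_add_cancel] at hadd
  rw [sub_smul, one_smul, eq_sub_iff_add_eq]
  exact hadd.symm.trans hshift

variable [InnerProductSpace ℂ E] [CompleteSpace E] [FiniteDimensional ℝ V]

theorem fourier_toLp_ae_eq {f : V → E} (hf1 : Integrable f) (hf2 : MemLp f 2) :
    (𝓕 (hf2.toLp f) : Lp E 2 (volume : Measure V)) =ᵐ[volume] 𝓕 f := by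
  refine ae_eq_of_integral_contDiff_smul_eq ((Lp.memLp _).locallyIntegrable one_le_two)
    (continuous_fourier hf1).locallyIntegrable fun φ hφ hφc => ?_
  set ψ : 𝓢(V, ℂ) := (hφc.comp_left (g := Complex.ofReal) rfl).toSchwartzMap
    (Complex.ofRealCLM.contDiff.comp hφ)
  have hψ : ∀ x (z : E), φ x • z = ψ x • z := fun x z => (Complex.coe_smul (φ x) z).symm
  have hdistr := DFunLike.congr_fun (Lp.fourier_toTemperedDistribution_eq (hf2.toLp f)) ψ
  rw [TemperedDistribution.fourier_apply, Lp.toTemperedDistribution_apply,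
    Lp.toTemperedDistribution_apply] at hdistr
  have hflip := VectorFourier.integral_fourierIntegral_smul_eq_flip (μ := volume) (ν := volume)
    (L := innerₗ V) Real.continuous_fourierChar continuous_inner ψ.integrable hf1
  rw [flip_innerₗ] at hflip
  simp only [hψ]
  calc ∫ x, ψ x • (𝓕 (hf2.toLp f) : Lp E 2 (volume : Measure V)) x
      = ∫ x, (𝓕 ψ) x • (hf2.toLp f) x := hdistr.symm
    _ = ∫ x, (𝓕 ψ) x • f x :=
      integral_congr_ae (hf2.coeFn_toLp.mono fun x hx => congrArg ((𝓕 ψ) x • ·) hx)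
    _ = ∫ x, ψ x • 𝓕 f x := hflip

theorem lintegral_enorm_fourier_sq {f : V → E} (hf1 : Integrable f) (hf2 : MemLp f 2) :
    ∫⁻ ξ, ‖𝓕 f ξ‖ₑ ^ 2 = ∫⁻ x, ‖f x‖ₑ ^ 2 := by
  have h := congrArg ENNReal.ofReal (Lp.norm_fourier_eq (hf2.toLp f))
  rw [ofReal_norm, ofReal_norm, Lp.enorm_def, Lp.enorm_def,
    eLpNorm_congr_ae (fourier_toLp_ae_eq hf1 hf2), eLpNorm_congr_ae hf2.coeFn_toLp] at h
  rw [lintegral_enorm_sq_eq_eLpNorm_sq, lintegral_enorm_sq_eq_eLpNorm_sq, h]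

end Plancherel

section RpowMeasure

/-- The measure `h ^ (-1 - s) dh` on `(0, ∞)`, homogeneous of degree `-s`, against which
increments are integrated in the Gagliardo seminorm. -/
noncomputable def rpowMeasure (s : ℝ) : Measure ℝ :=
  (volume.restrict (Set.Ioi 0)).withDensity fun h => ENNReal.ofReal (h ^ (-1 - s))

variable {s : ℝ}

instance : SFinite (rpowMeasure s) :=
  inferInstanceAs (SFinite (Measure.withDensity _ _))

theorem lintegral_rpowMeasure (s : ℝ) (u : ℝ → ℝ≥0∞) :
    ∫⁻ h, u h ∂rpowMeasure s =
      ∫⁻ h in Set.Ioi 0, ENNReal.ofReal (h ^ (-1 - s)) * u h :=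
  lintegral_withDensity_eq_lintegral_mul_non_measurable _ (by fun_prop)
    (.of_forall fun _ => ENNReal.ofReal_lt_top) u

theorem ae_rpowMeasure_pos (s : ℝ) : ∀ᵐ h ∂rpowMeasure s, 0 < h :=
  (withDensity_absolutelyContinuous _ _).ae_le (ae_restrict_mem measurableSet_Ioi)

theorem lintegral_comp_mul_left {c : ℝ} (hc : c ≠ 0) (u : ℝ → ℝ≥0∞) :
    ∫⁻ x, u (c * x) = ENNReal.ofReal |c⁻¹| * ∫⁻ x, u x := by
  rw [← smul_eq_mul, ← lintegral_smul_measure, ← Real.map_volume_mul_left hc]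
  exact (lintegral_map_equiv u (Homeomorph.mulLeft₀ c hc).toMeasurableEquiv).symm

theorem lintegral_rpowMeasure_comp_mul_left {c : ℝ} (hc : 0 < c) (s : ℝ) (u : ℝ → ℝ≥0∞) :
    ∫⁻ h, u (c * h) ∂rpowMeasure s = ENNReal.ofReal (c ^ s) * ∫⁻ h, u h ∂rpowMeasure s := by
  set v : ℝ → ℝ≥0∞ := (Set.Ioi 0).indicator fun h => ENNReal.ofReal (h ^ (-1 - s)) * u h with hv
  have hscale : ∀ h, (Set.Ioi 0).indicator (fun h => ENNReal.ofReal (h ^ (-1 - s)) * u (c * h)) h =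
      ENNReal.ofReal (c ^ (1 + s)) * v (c * h) := fun h => by
    by_cases hh : 0 < h
    · rw [hv, Set.indicator_of_mem (Set.mem_Ioi.2 hh),
        Set.indicator_of_mem (Set.mem_Ioi.2 (mul_pos hc hh)), ← mul_assoc,
        ← ENNReal.ofReal_mul (by positivity), Real.mul_rpow hc.le hh.le, ← mul_assoc,
        ← Real.rpow_add hc]
      simp
    · simp [hv, hh, hc]
  have hpow : c ^ (1 + s) * |c⁻¹| = c ^ s := by
    rw [abs_of_pos (inv_pos.2 hc), Real.rpow_add hc, Real.rpow_one]
    field_simp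
  rw [lintegral_rpowMeasure, lintegral_rpowMeasure, ← lintegral_indicator measurableSet_Ioi,
    ← lintegral_indicator measurableSet_Ioi, lintegral_congr hscale,
    lintegral_const_mul' _ _ ENNReal.ofReal_ne_top, lintegral_comp_mul_left hc.ne', ← mul_assoc,
    ← ENNReal.ofReal_mul (by positivity), hpow]

theorem rpowMeasure_Ioi_ne_top (hs : 0 < s) {δ : ℝ} (hδ : 0 < δ) :
    rpowMeasure s (Set.Ioi δ) ≠ ⊤ := by
  rw [rpowMeasure, withDensity_apply _ measurableSet_Ioi,
    Measure.restrict_restrict measurableSet_Ioi, Set.inter_eq_left.2 (Set.Ioi_subset_Ioi hδ.le)]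
  exact (integrableOn_Ioi_rpow_of_lt (by linarith) hδ).lintegral_lt_top.ne

theorem setLIntegral_Iic_rpowMeasure_sq_ne_top (hs : s < 2) :
    ∫⁻ h in Set.Iic 1, ENNReal.ofReal (h ^ 2) ∂rpowMeasure s ≠ ⊤ := by
  have hintegrable : IntegrableOn (fun h : ℝ => h ^ (1 - s)) (Set.Ioc 0 1) :=
    (intervalIntegrable_iff_integrableOn_Ioc_of_le zero_le_one).1
      (intervalIntegral.intervalIntegrable_rpow' (by linarith))
  rw [← lintegral_indicator measurableSet_Iic, lintegral_rpowMeasure]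
  simp only [← Set.indicator_mul_right _ fun h : ℝ => ENNReal.ofReal (h ^ (-1 - s))]
  rw [setLIntegral_indicator measurableSet_Iic, Set.Iic_inter_Ioi]
  refine ne_top_of_le_ne_top hintegrable.lintegral_lt_top.ne
    (setLIntegral_mono' measurableSet_Ioc fun h hh => ?_)
  rw [← ENNReal.ofReal_mul (Real.rpow_nonneg hh.1.le _), ← Real.rpow_two, ← Real.rpow_add hh.1]
  exact (congrArg (fun r => ENNReal.ofReal (h ^ r)) (by ring)).le

end RpowMeasure

section Gagliardo

variable {E : Type*} [NormedAddCommGroup E] {s : ℝ}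

/-- The square of the Gagliardo seminorm of order `s / 2` of `f : ℝ → E`. Only positive increments
`h` are integrated; by translation invariance this is half of the usual double integral. -/
noncomputable def gagliardoEnergy (s : ℝ) (f : ℝ → E) : ℝ≥0∞ :=
  ∫⁻ h, (∫⁻ x, ‖f (x + h) - f x‖ₑ ^ 2) ∂rpowMeasure s

/-- The constant relating the Gagliardo energy to the multiplier `|ξ| ^ s` on the Fourier side. -/
noncomputable def gagliardoConst (s : ℝ) : ℝ≥0∞ :=
  ∫⁻ h, ‖(𝐞 h : ℂ) - 1‖ₑ ^ 2 ∂rpowMeasure s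

theorem enorm_fourierChar_neg_sub_one (x : ℝ) : ‖(𝐞 (-x) : ℂ) - 1‖ₑ = ‖(𝐞 x : ℂ) - 1‖ₑ := by
  rw [← RCLike.enorm_conj ((𝐞 x : ℂ) - 1), map_sub, map_one, AddChar.map_neg_eq_inv,
    Circle.coe_inv_eq_conj]

theorem enorm_fourierChar_sub_one_le_two (x : ℝ) : ‖(𝐞 x : ℂ) - 1‖ₑ ≤ 2 := by
  refine enorm_sub_le.trans_eq ?_
  rw [← ofReal_norm, Circle.norm_coe, ENNReal.ofReal_one, enorm_one, one_add_one_eq_two]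

theorem enorm_fourierChar_sub_one_sq_le (x : ℝ) :
    ‖(𝐞 x : ℂ) - 1‖ₑ ^ 2 ≤ ENNReal.ofReal ((2 * Real.pi) ^ 2) * ENNReal.ofReal (x ^ 2) := by
  rw [← ofReal_norm, ← ENNReal.ofReal_pow (norm_nonneg _), ← ENNReal.ofReal_mul (by positivity),
    ← mul_pow, ← sq_abs (_ * x), Real.fourierChar_apply, mul_comm _ Complex.I]
  gcongr
  exact Real.norm_exp_I_mul_ofReal_sub_one_le

theorem gagliardoConst_ne_top (hs0 : 0 < s) (hs2 : s < 2) : gagliardoConst s ≠ ⊤ := by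
  rw [gagliardoConst, ← lintegral_add_compl _ (measurableSet_Iic (a := (1 : ℝ))), Set.compl_Iic]
  refine ENNReal.add_ne_top.2 ⟨?_, ?_⟩
  · refine ne_top_of_le_ne_top (ENNReal.mul_ne_top (a := ENNReal.ofReal ((2 * Real.pi) ^ 2))
      ENNReal.ofReal_ne_top (setLIntegral_Iic_rpowMeasure_sq_ne_top hs2)) ?_
    rw [← lintegral_const_mul' _ _ ENNReal.ofReal_ne_top]
    exact lintegral_mono fun h => enorm_fourierChar_sub_one_sq_le h
  · refine ne_top_of_le_ne_top (ENNReal.mul_ne_top (a := 2 ^ 2) (by simp)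
      (rpowMeasure_Ioi_ne_top hs0 one_pos)) ?_
    rw [← setLIntegral_const]
    gcongr
    exact enorm_fourierChar_sub_one_le_two _

theorem gagliardoConst_ne_zero (s : ℝ) : gagliardoConst s ≠ 0 := by
  have hmem : ∀ h ∈ Set.Ioo (0 : ℝ) 1,
      h ∈ Function.support fun h : ℝ => ENNReal.ofReal (h ^ (-1 - s)) * ‖(𝐞 h : ℂ) - 1‖ₑ ^ 2 := by
    intro h hh
    have hchar : (𝐞 h : ℂ) ≠ 1 := fun H => by
      rw [Real.fourierChar_apply, Complex.exp_eq_one_iff] at H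
      obtain ⟨n, hn⟩ := H
      have hhn : h = n := by
        have : (h : ℂ) = n := mul_right_cancel₀ Complex.two_pi_I_ne_zero (by
          rw [← hn]; push_cast; ring)
        exact_mod_cast this
      have h0 : 0 < n := by exact_mod_cast hhn ▸ hh.1
      have h1 : n < 1 := by exact_mod_cast hhn ▸ hh.2
      omega
    simp [sub_eq_zero, hchar, Real.rpow_pos_of_pos hh.1]
  rw [gagliardoConst, lintegral_rpowMeasure, ← pos_iff_ne_zero, setLIntegral_pos_iff (by fun_prop)]
  refine lt_of_lt_of_le ?_ (measure_mono fun h hh => ⟨hmem h hh, hh.1⟩)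
  simp

theorem lintegral_rpowMeasure_enorm_fourierChar_sub_one (hs : 0 < s) (ξ : ℝ) :
    ∫⁻ h, ‖(𝐞 (h * ξ) : ℂ) - 1‖ₑ ^ 2 ∂rpowMeasure s = gagliardoConst s * ‖ξ‖ₑ ^ s := by
  rcases eq_or_ne ξ 0 with rfl | hξ
  · simp [hs]
  have habs : ∀ h, ‖(𝐞 (h * ξ) : ℂ) - 1‖ₑ = ‖(𝐞 (|ξ| * h) : ℂ) - 1‖ₑ := fun h => by
    rcases abs_choice ξ with H | H <;> rw [H, mul_comm h]
    rw [neg_mul, enorm_fourierChar_neg_sub_one]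
  simp only [habs]
  rw [lintegral_rpowMeasure_comp_mul_left (abs_pos.2 hξ) s fun h => ‖(𝐞 h : ℂ) - 1‖ₑ ^ 2,
    ← ENNReal.ofReal_rpow_of_nonneg (abs_nonneg ξ) hs.le, ← Real.norm_eq_abs, ofReal_norm,
    gagliardoConst, mul_comm]

theorem gagliardoEnergy_eq_lintegral_fourier [InnerProductSpace ℂ E] [CompleteSpace E] (hs : 0 < s)
    {f : ℝ → E} (hf1 : Integrable f) (hf2 : MemLp f 2) :
    gagliardoEnergy s f = gagliardoConst s * ∫⁻ ξ, ‖ξ‖ₑ ^ s * ‖𝓕 f ξ‖ₑ ^ 2 := by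
  have hplancherel : ∀ h : ℝ, ∫⁻ x, ‖f (x + h) - f x‖ₑ ^ 2 =
      ∫⁻ ξ, ‖(𝐞 (h * ξ) : ℂ) - 1‖ₑ ^ 2 * ‖𝓕 f ξ‖ₑ ^ 2 := fun h => by
    have hshift : MemLp (fun x => f (x + h)) 2 :=
      hf2.comp_measurePreserving (measurePreserving_add_right volume h)
    refine (lintegral_enorm_fourier_sq ((hf1.comp_add_right h).sub hf1)
      (hshift.sub hf2)).symm.trans (lintegral_congr fun ξ => ?_)
    change ‖𝓕 (fun x => f (x + h) - f x) ξ‖ₑ ^ 2 = _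
    simp only [fourier_comp_add_right_sub hf1, enorm_smul, mul_pow, RCLike.inner_apply,
      conj_trivial, mul_comm ξ h]
  have hmeas : Measurable fun ξ => ‖𝓕 f ξ‖ₑ := (continuous_fourier hf1).enorm.measurable
  have hmult : Measurable fun p : ℝ × ℝ => ‖(𝐞 (p.1 * p.2) : ℂ) - 1‖ₑ ^ 2 * ‖𝓕 f p.2‖ₑ ^ 2 :=
    .mul (by fun_prop) ((hmeas.comp measurable_snd).pow_const 2)
  calc gagliardoEnergy s f
      = ∫⁻ h, (∫⁻ ξ, ‖(𝐞 (h * ξ) : ℂ) - 1‖ₑ ^ 2 * ‖𝓕 f ξ‖ₑ ^ 2) ∂rpowMeasure s :=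
        lintegral_congr hplancherel
    _ = ∫⁻ ξ, (∫⁻ h, ‖(𝐞 (h * ξ) : ℂ) - 1‖ₑ ^ 2 * ‖𝓕 f ξ‖ₑ ^ 2 ∂rpowMeasure s) :=
        lintegral_lintegral_swap hmult.aemeasurable
    _ = ∫⁻ ξ, gagliardoConst s * (‖ξ‖ₑ ^ s * ‖𝓕 f ξ‖ₑ ^ 2) :=
        lintegral_congr fun ξ => by
          rw [lintegral_mul_const' _ _ (by simp),
            lintegral_rpowMeasure_enorm_fourierChar_sub_one hs, mul_assoc]
    _ = gagliardoConst s * ∫⁻ ξ, ‖ξ‖ₑ ^ s * ‖𝓕 f ξ‖ₑ ^ 2 :=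
        lintegral_const_mul _ (by fun_prop)

end Gagliardo

section Hardy

variable {E : Type*} [NormedAddCommGroup E] {s : ℝ} {U : Set ℝ}

/-- The points of `U` that leave `U` when moved to the left by `h`. For `U = [a, ∞)` this is
`[a, a + h)`. -/
def boundaryLayer (U : Set ℝ) (h : ℝ) : Set ℝ :=
  {x | x ∈ U ∧ x - h ∉ U}

theorem measurableSet_boundaryLayer (hU : MeasurableSet U) (h : ℝ) :
    MeasurableSet (boundaryLayer U h) :=
  hU.inter (hU.compl.preimage (measurable_sub_const h))

theorem boundaryLayer_mono (hU : IsUpperSet U) : Monotone (boundaryLayer U) :=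
  fun _ _ hle _ hx => ⟨hx.1, fun hmem => hx.2 (hU (by linarith) hmem)⟩

theorem measurable_setLIntegral_boundaryLayer (hU : IsUpperSet U) (u : ℝ → ℝ≥0∞) :
    Measurable fun h => ∫⁻ x in boundaryLayer U h, u x :=
  Monotone.measurable fun _ _ hle => lintegral_mono_set (boundaryLayer_mono hU hle)

theorem setLIntegral_boundaryLayer_two_mul (hU : IsUpperSet U) {h : ℝ} (hh : 0 ≤ h)
    (u : ℝ → ℝ≥0∞) :
    ∫⁻ x in boundaryLayer U (2 * h), u x =
      (∫⁻ x in boundaryLayer U h, u x) + ∫⁻ x in boundaryLayer U h, u (x + h) := by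
  have hunion : boundaryLayer U (2 * h) =
      boundaryLayer U h ∪ (fun x => x - h) ⁻¹' boundaryLayer U h := by
    ext x
    have hleft : x - h ∈ U → x ∈ U := hU (by linarith)
    have hleft' : x - h - h ∈ U → x - h ∈ U := hU (by linarith)
    simp only [boundaryLayer, Set.mem_ofPred_eq, Set.mem_union, Set.mem_preimage, two_mul,
      ← sub_sub]
    tauto
  have hdisj : Disjoint (boundaryLayer U h) ((fun x => x - h) ⁻¹' boundaryLayer U h) :=
    Set.disjoint_left.2 fun x hx hx' => hx.2 hx'.1
  have htranslate := (measurePreserving_sub_right volume h).setLIntegral_comp_preimage_emb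
    (measurableEmbedding_subRight h) (fun x => u (x + h)) (boundaryLayer U h)
  simp only [sub_add_cancel] at htranslate
  have hmeas : MeasurableSet ((fun x => x - h) ⁻¹' boundaryLayer U h) :=
    measurable_sub_const h (measurableSet_boundaryLayer hU.ordConnected.measurableSet h)
  rw [hunion, lintegral_union hmeas hdisj, htranslate]

theorem enorm_sq_le_add_enorm_sub_sq {ε : ℝ≥0} (hε : 0 < ε) (z w : E) :
    ‖z‖ₑ ^ 2 ≤ (1 + ε) * ‖w‖ₑ ^ 2 + (1 + (ε⁻¹ : ℝ≥0)) * ‖w - z‖ₑ ^ 2 := by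
  have htriangle : ‖z‖ ≤ ‖w‖ + ‖w - z‖ := by simpa using norm_sub_le w (w - z)
  have hyoung : 2 * (‖w‖ * ‖w - z‖) ≤ ε * ‖w‖ ^ 2 + (ε : ℝ)⁻¹ * ‖w - z‖ ^ 2 := by
    have hsq : 0 ≤ (ε : ℝ)⁻¹ * (ε * ‖w‖ - ‖w - z‖) ^ 2 := by positivity
    field_simp at hsq ⊢
    linarith
  have hreal : ‖z‖ ^ 2 ≤ (1 + ε) * ‖w‖ ^ 2 + (1 + (ε : ℝ)⁻¹) * ‖w - z‖ ^ 2 := by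
    nlinarith [norm_nonneg z]
  simp only [enorm_eq_nnnorm]
  exact_mod_cast hreal

theorem setLIntegral_boundaryLayer_le_doubling (hU : IsUpperSet U) {f : ℝ → E}
    (hf : AEStronglyMeasurable f) {ε : ℝ≥0} (hε : 0 < ε) {h : ℝ} (hh : 0 ≤ h) :
    (2 + ε) * ∫⁻ x in boundaryLayer U h, ‖f x‖ₑ ^ 2 ≤
      (1 + ε) * (∫⁻ x in boundaryLayer U (2 * h), ‖f x‖ₑ ^ 2) +
        (1 + (ε⁻¹ : ℝ≥0)) * ∫⁻ x, ‖f (x + h) - f x‖ₑ ^ 2 := by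
  set A := ∫⁻ x in boundaryLayer U h, ‖f x‖ₑ ^ 2
  set B := ∫⁻ x in boundaryLayer U h, ‖f (x + h)‖ₑ ^ 2
  set D := ∫⁻ x, ‖f (x + h) - f x‖ₑ ^ 2
  have hshift : AEMeasurable (fun x => (1 + ε) * ‖f (x + h)‖ₑ ^ 2)
      (volume.restrict (boundaryLayer U h)) :=
    (((hf.comp_measurePreserving (measurePreserving_add_right volume h)).enorm.pow_const
      2).const_mul _).restrict
  have hAB : A ≤ (1 + ε) * B + (1 + (ε⁻¹ : ℝ≥0)) * D := calc
    A ≤ ∫⁻ x in boundaryLayer U h, ((1 + ε) * ‖f (x + h)‖ₑ ^ 2 +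
          (1 + (ε⁻¹ : ℝ≥0)) * ‖f (x + h) - f x‖ₑ ^ 2) :=
        lintegral_mono fun x => enorm_sq_le_add_enorm_sub_sq hε _ _
    _ = (1 + ε) * B +
          (1 + (ε⁻¹ : ℝ≥0)) * ∫⁻ x in boundaryLayer U h, ‖f (x + h) - f x‖ₑ ^ 2 := by
        rw [lintegral_add_left' hshift, lintegral_const_mul' _ _ (by finiteness),
          lintegral_const_mul' _ _ (by finiteness)]
    _ ≤ _ := by gcongr; exact setLIntegral_le_lintegral _ _
  rw [setLIntegral_boundaryLayer_two_mul hU hh]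
  calc (2 + ε) * A = A + (1 + ε) * A := by ring
    _ ≤ (1 + ε) * B + (1 + (ε⁻¹ : ℝ≥0)) * D + (1 + ε) * A := by gcongr
    _ = (1 + ε) * (A + B) + (1 + (ε⁻¹ : ℝ≥0)) * D := by ring

theorem setLIntegral_Ioi_rpowMeasure_comp_two_mul_le (s : ℝ) {δ : ℝ} (hδ : 0 < δ)
    (u : ℝ → ℝ≥0∞) :
    ∫⁻ h in Set.Ioi δ, u (2 * h) ∂rpowMeasure s ≤
      ENNReal.ofReal (2 ^ s) * ∫⁻ h in Set.Ioi δ, u h ∂rpowMeasure s := by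
  rw [← lintegral_indicator measurableSet_Ioi, ← lintegral_indicator measurableSet_Ioi,
    ← lintegral_rpowMeasure_comp_mul_left two_pos]
  refine lintegral_mono fun h => ?_
  by_cases hh : δ < h
  · rw [Set.indicator_of_mem (Set.mem_Ioi.2 hh),
      Set.indicator_of_mem (Set.mem_Ioi.2 (by linarith : δ < 2 * h))]
  · simp [hh]

theorem lintegral_rpowMeasure_eq_iSup_Ioi (s : ℝ) (u : ℝ → ℝ≥0∞) :
    ∫⁻ h, u h ∂rpowMeasure s =
      ⨆ n : ℕ, ∫⁻ h in Set.Ioi (1 / ((n : ℝ) + 1)), u h ∂rpowMeasure s := by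
  have hmono : Monotone fun n : ℕ => Set.Ioi (1 / ((n : ℝ) + 1)) :=
    fun m n hmn => Set.Ioi_subset_Ioi (Nat.one_div_le_one_div hmn)
  rw [← setLIntegral_iUnion_of_directed _ hmono.directed_le]
  have hunion : ∀ᵐ h ∂rpowMeasure s, h ∈ ⋃ n : ℕ, Set.Ioi (1 / ((n : ℝ) + 1)) :=
    (ae_rpowMeasure_pos s).mono fun h hh => Set.mem_iUnion.2 (exists_nat_one_div_lt hh)
  rw [Measure.restrict_eq_self_of_ae_mem hunion]

-- Truncating to `h > δ` makes the integral of `A` finite, so that it can be absorbed.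
theorem lintegral_rpowMeasure_le_of_doubling (hs : 0 < s) {A D : ℝ → ℝ≥0∞} (hA : Measurable A)
    {L α β : ℝ≥0∞} (hL : L ≠ ⊤) (hβ : β ≠ ⊤) (hAL : ∀ h, A h ≤ L)
    (hAD : ∀ h, 0 < h → α * A h ≤ β * A (2 * h) + D h) :
    (α - β * ENNReal.ofReal (2 ^ s)) * ∫⁻ h, A h ∂rpowMeasure s ≤ ∫⁻ h, D h ∂rpowMeasure s := by
  rw [lintegral_rpowMeasure_eq_iSup_Ioi s A, ENNReal.mul_iSup]
  refine iSup_le fun n => ?_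
  set δ : ℝ := 1 / (n + 1)
  have hδ : 0 < δ := Nat.one_div_pos_of_nat
  set J := ∫⁻ h in Set.Ioi δ, A h ∂rpowMeasure s
  have hJ : J ≠ ⊤ := by
    refine ne_top_of_le_ne_top (ENNReal.mul_ne_top hL (rpowMeasure_Ioi_ne_top hs hδ)) ?_
    rw [← setLIntegral_const]
    exact lintegral_mono hAL
  rw [ENNReal.sub_mul fun _ _ => hJ, tsub_le_iff_left, mul_assoc]
  calc α * J = ∫⁻ h in Set.Ioi δ, α * A h ∂rpowMeasure s := (lintegral_const_mul _ hA).symm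
    _ ≤ ∫⁻ h in Set.Ioi δ, (β * A (2 * h) + D h) ∂rpowMeasure s :=
      setLIntegral_mono' measurableSet_Ioi fun h hh => hAD h (hδ.trans hh)
    _ = β * (∫⁻ h in Set.Ioi δ, A (2 * h) ∂rpowMeasure s) +
          ∫⁻ h in Set.Ioi δ, D h ∂rpowMeasure s := by
      rw [lintegral_add_left (by fun_prop), lintegral_const_mul' _ _ hβ]
    _ ≤ β * (ENNReal.ofReal (2 ^ s) * J) + ∫⁻ h, D h ∂rpowMeasure s := by
      gcongr
      · exact setLIntegral_Ioi_rpowMeasure_comp_two_mul_le s hδ A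
      · exact Measure.restrict_le_self

theorem exists_one_add_mul_two_rpow_lt (hs1 : s < 1) :
    ∃ ε : ℝ≥0, 0 < ε ∧ (1 + ε) * ENNReal.ofReal (2 ^ s) < 2 + ε := by
  have hpow0 : (0 : ℝ) < 2 ^ s := by positivity
  have hpow2 : (2 : ℝ) ^ s < 2 := by simpa using Real.rpow_lt_rpow_of_exponent_lt one_lt_two hs1
  obtain ⟨ε, hε⟩ : ∃ ε : ℝ≥0, (ε : ℝ) = (2 - 2 ^ s) / 2 := ⟨⟨_, by linarith⟩, rfl⟩
  refine ⟨ε, NNReal.coe_pos.1 (by linarith), ?_⟩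
  have hreal : (1 + (ε : ℝ)) * 2 ^ s < 2 + ε := by rw [hε]; nlinarith
  have hofReal := (ENNReal.ofReal_lt_ofReal_iff (by positivity)).2 hreal
  rw [ENNReal.ofReal_mul (by positivity)] at hofReal
  simpa [ENNReal.ofReal_add] using hofReal

variable (E) in
/-- Fractional Hardy inequality of order `s / 2 < 1 / 2` on a half-line. -/
theorem exists_lintegral_boundaryLayer_le_gagliardoEnergy (hs0 : 0 < s) (hs1 : s < 1) :
    ∃ C : ℝ≥0∞, C ≠ ⊤ ∧ ∀ (U : Set ℝ) (f : ℝ → E), IsUpperSet U → MemLp f 2 →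
      ∫⁻ h, (∫⁻ x in boundaryLayer U h, ‖f x‖ₑ ^ 2) ∂rpowMeasure s ≤ C * gagliardoEnergy s f := by
  obtain ⟨ε, hε, hlt⟩ := exists_one_add_mul_two_rpow_lt hs1
  set κ : ℝ≥0∞ := 2 + ε - (1 + ε) * ENNReal.ofReal (2 ^ s)
  have hκ0 : κ ≠ 0 := (tsub_pos_of_lt hlt).ne'
  have hκ : κ ≠ ⊤ := ENNReal.sub_ne_top (by finiteness)
  refine ⟨κ⁻¹ * (1 + (ε⁻¹ : ℝ≥0)), by finiteness, fun U f hU hf => ?_⟩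
  have hL : ∫⁻ x, ‖f x‖ₑ ^ 2 ≠ ⊤ := by
    rw [lintegral_enorm_sq_eq_eLpNorm_sq]
    exact ENNReal.pow_ne_top hf.2.ne
  have habsorb := lintegral_rpowMeasure_le_of_doubling hs0
    (measurable_setLIntegral_boundaryLayer hU fun x => ‖f x‖ₑ ^ 2) hL (by finiteness)
    (fun h => setLIntegral_le_lintegral _ _)
    fun h hh => setLIntegral_boundaryLayer_le_doubling hU hf.1 hε hh.le
  rw [lintegral_const_mul' _ _ (by finiteness)] at habsorb
  rwa [mul_assoc, ← ENNReal.mul_le_iff_le_inv hκ0 hκ]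

end Hardy

section Cutoff

variable {E : Type*} [NormedAddCommGroup E] {s : ℝ} {U : Set ℝ}

theorem enorm_sub_indicator_sq_le_of_isUpperSet (hU : IsUpperSet U) (f : ℝ → E) {h : ℝ}
    (hh : 0 ≤ h) (x : ℝ) :
    ‖U.indicator f (x + h) - U.indicator f x‖ₑ ^ 2 ≤
      ‖f (x + h) - f x‖ₑ ^ 2 + (boundaryLayer U h).indicator (fun y => ‖f y‖ₑ ^ 2) (x + h) := by
  have hmem : x + h ∈ boundaryLayer U h ↔ x + h ∈ U ∧ x ∉ U := by simp [boundaryLayer]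
  have hup : x ∈ U → x + h ∈ U := hU (by linarith)
  by_cases hx : x ∈ U
  · simp [hx, hup hx]
  by_cases hxh : x + h ∈ U
  · simp [hx, hxh, hmem]
  · simp [hx, hxh]

theorem enorm_sub_indicator_compl_sq_le_of_isUpperSet (hU : IsUpperSet U) (f : ℝ → E) {h : ℝ}
    (hh : 0 ≤ h) (x : ℝ) :
    ‖Uᶜ.indicator f (x + h) - Uᶜ.indicator f x‖ₑ ^ 2 ≤
      4 * ‖f (x + h) - f x‖ₑ ^ 2 +
        2 * (boundaryLayer U h).indicator (fun y => ‖f y‖ₑ ^ 2) (x + h) := by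
  have hsplit := enorm_sq_le_add_enorm_sub_sq one_pos
    (Uᶜ.indicator f (x + h) - Uᶜ.indicator f x) (f (x + h) - f x)
  have hcompl : f (x + h) - f x - (Uᶜ.indicator f (x + h) - Uᶜ.indicator f x) =
      U.indicator f (x + h) - U.indicator f x := by
    simp only [Set.indicator_compl, Pi.sub_apply]
    abel
  rw [hcompl, inv_one, ENNReal.coe_one, one_add_one_eq_two] at hsplit
  calc _ ≤ _ := hsplit
    _ ≤ 2 * ‖f (x + h) - f x‖ₑ ^ 2 + 2 * (‖f (x + h) - f x‖ₑ ^ 2 +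
          (boundaryLayer U h).indicator (fun y => ‖f y‖ₑ ^ 2) (x + h)) := by
        gcongr
        exact enorm_sub_indicator_sq_le_of_isUpperSet hU f hh x
    _ = _ := by ring

theorem gagliardoEnergy_le_add_lintegral_boundaryLayer (hU : IsUpperSet U) {f g : ℝ → E}
    {a b : ℝ≥0∞} (ha : a ≠ ⊤) (hb : b ≠ ⊤)
    (hfg : ∀ h, 0 < h → ∀ x, ‖g (x + h) - g x‖ₑ ^ 2 ≤
      a * ‖f (x + h) - f x‖ₑ ^ 2 +
        b * (boundaryLayer U h).indicator (fun y => ‖f y‖ₑ ^ 2) (x + h))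
    (hf : AEStronglyMeasurable f) :
    gagliardoEnergy s g ≤ a * gagliardoEnergy s f +
      b * ∫⁻ h, (∫⁻ x in boundaryLayer U h, ‖f x‖ₑ ^ 2) ∂rpowMeasure s := by
  have hincrement : ∀ h, 0 < h → ∫⁻ x, ‖g (x + h) - g x‖ₑ ^ 2 ≤
      a * (∫⁻ x, ‖f (x + h) - f x‖ₑ ^ 2) +
        b * ∫⁻ x in boundaryLayer U h, ‖f x‖ₑ ^ 2 := fun h hh => by
    have hdiff : AEMeasurable fun x => a * ‖f (x + h) - f x‖ₑ ^ 2 :=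
      (((hf.comp_measurePreserving (measurePreserving_add_right volume h)).sub
        hf).enorm.pow_const 2).const_mul a
    refine (lintegral_mono (hfg h hh)).trans_eq ?_
    rw [lintegral_add_left' hdiff, lintegral_const_mul' _ _ ha, lintegral_const_mul' _ _ hb,
      lintegral_add_right_eq_self ((boundaryLayer U h).indicator fun y => ‖f y‖ₑ ^ 2),
      lintegral_indicator (measurableSet_boundaryLayer hU.ordConnected.measurableSet h)]
  calc gagliardoEnergy s g
      ≤ ∫⁻ h, (a * (∫⁻ x, ‖f (x + h) - f x‖ₑ ^ 2) +
          b * ∫⁻ x in boundaryLayer U h, ‖f x‖ₑ ^ 2) ∂rpowMeasure s :=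
        lintegral_mono_ae ((ae_rpowMeasure_pos s).mono hincrement)
    _ = _ := by
        rw [lintegral_add_right _ ((measurable_setLIntegral_boundaryLayer hU _).const_mul b),
          lintegral_const_mul' _ _ ha, lintegral_const_mul' _ _ hb, gagliardoEnergy]

variable (E) in
theorem exists_gagliardoEnergy_indicator_le (hs0 : 0 < s) (hs1 : s < 1) :
    ∃ C : ℝ≥0∞, C ≠ ⊤ ∧ ∀ (I : Set ℝ) (f : ℝ → E), I.OrdConnected → MemLp f 2 →
      gagliardoEnergy s (I.indicator f) ≤ C * gagliardoEnergy s f := by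
  obtain ⟨C, hC, hardy⟩ := exists_lintegral_boundaryLayer_le_gagliardoEnergy E hs0 hs1
  have hupper : ∀ (U : Set ℝ) (f : ℝ → E), IsUpperSet U → MemLp f 2 →
      gagliardoEnergy s (U.indicator f) ≤ (1 + C) * gagliardoEnergy s f := fun U f hU hf => by
    refine (gagliardoEnergy_le_add_lintegral_boundaryLayer hU (a := 1) (b := 1) (by simp) (by simp)
      (fun h hh x => ?_) hf.1).trans ?_
    · simpa only [one_mul] using enorm_sub_indicator_sq_le_of_isUpperSet hU f hh.le x
    · rw [one_mul, one_mul, add_mul, one_mul]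
      gcongr
      exact hardy U f hU hf
  have hlower : ∀ (L : Set ℝ) (f : ℝ → E), IsLowerSet L → MemLp f 2 →
      gagliardoEnergy s (L.indicator f) ≤ (4 + 2 * C) * gagliardoEnergy s f := fun L f hL hf => by
    refine (gagliardoEnergy_le_add_lintegral_boundaryLayer hL.compl (a := 4) (b := 2) (by simp)
      (by simp) (fun h hh x => ?_) hf.1).trans ?_
    · simpa only [compl_compl] using
        enorm_sub_indicator_compl_sq_le_of_isUpperSet hL.compl f hh.le x
    · rw [add_mul, mul_assoc]
      gcongr
      exact hardy Lᶜ f hL.compl hf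
  refine ⟨(1 + C) * (4 + 2 * C), by finiteness, fun I f hI hf => ?_⟩
  have hL := (lowerClosure I).lower
  rw [← hI.upperClosure_inter_lowerClosure, ← Set.indicator_indicator, mul_assoc]
  refine (hupper _ _ (upperClosure I).upper (hf.indicator hL.ordConnected.measurableSet)).trans ?_
  gcongr
  exact hlower _ f hL hf

end Cutoff

section FourierCutoff

variable {E : Type*} [NormedAddCommGroup E] [InnerProductSpace ℂ E] [CompleteSpace E] {s : ℝ}

theorem lintegral_enorm_fourier_indicator_sq_le {I : Set ℝ} (hI : MeasurableSet I) {f : ℝ → E}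
    (hf1 : Integrable f) (hf2 : MemLp f 2) :
    ∫⁻ ξ, ‖𝓕 (I.indicator f) ξ‖ₑ ^ 2 ≤ ∫⁻ ξ, ‖𝓕 f ξ‖ₑ ^ 2 := by
  rw [lintegral_enorm_fourier_sq (hf1.indicator hI) (hf2.indicator hI),
    lintegral_enorm_fourier_sq hf1 hf2]
  gcongr
  exact enorm_indicator_le_enorm_self _ _

variable (E) in
theorem exists_lintegral_enorm_rpow_mul_fourier_indicator_le (hs0 : 0 ≤ s) (hs1 : s < 1) :
    ∃ C : ℝ≥0∞, C ≠ ⊤ ∧ ∀ (I : Set ℝ) (f : ℝ → E), I.OrdConnected → Integrable f → MemLp f 2 →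
      ∫⁻ ξ, ‖ξ‖ₑ ^ s * ‖𝓕 (I.indicator f) ξ‖ₑ ^ 2 ≤ C * ∫⁻ ξ, ‖ξ‖ₑ ^ s * ‖𝓕 f ξ‖ₑ ^ 2 := by
  rcases hs0.eq_or_lt with rfl | hs0
  · refine ⟨1, ENNReal.one_ne_top, fun I f hI hf1 hf2 => ?_⟩
    simpa using lintegral_enorm_fourier_indicator_sq_le hI.measurableSet hf1 hf2
  · obtain ⟨C, hC, hcut⟩ := exists_gagliardoEnergy_indicator_le E hs0 hs1
    refine ⟨C, hC, fun I f hI hf1 hf2 => ?_⟩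
    rw [← ENNReal.mul_le_mul_iff_right (gagliardoConst_ne_zero s)
        (gagliardoConst_ne_top hs0 (by linarith)), mul_left_comm,
      ← gagliardoEnergy_eq_lintegral_fourier hs0 (hf1.indicator hI.measurableSet)
        (hf2.indicator hI.measurableSet),
      ← gagliardoEnergy_eq_lintegral_fourier hs0 hf1 hf2]
    exact hcut I f hI hf2

variable (E) in
theorem exists_lintegral_one_add_rpow_mul_fourier_indicator_le (c : ℝ) (hs0 : 0 ≤ s) (hs1 : s < 1) :
    ∃ C : ℝ≥0∞, C ≠ ⊤ ∧ ∀ (I : Set ℝ) (f : ℝ → E), I.OrdConnected → Integrable f → MemLp f 2 →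
      ∫⁻ ξ, (1 + ‖c * ξ‖ₑ) ^ s * ‖𝓕 (I.indicator f) ξ‖ₑ ^ 2 ≤
        C * ∫⁻ ξ, (1 + ‖c * ξ‖ₑ) ^ s * ‖𝓕 f ξ‖ₑ ^ 2 := by
  obtain ⟨C, hC, hcut⟩ := exists_lintegral_enorm_rpow_mul_fourier_indicator_le E hs0 hs1
  refine ⟨1 + C, by finiteness, fun I f hI hf1 hf2 => ?_⟩
  have hmeas : Measurable fun ξ => ‖𝓕 (I.indicator f) ξ‖ₑ :=
    (continuous_fourier (hf1.indicator hI.measurableSet)).enorm.measurable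
  have hweight_le : ∀ ξ : ℝ, (1 + ‖c * ξ‖ₑ) ^ s ≤ 1 + ‖c‖ₑ ^ s * ‖ξ‖ₑ ^ s := fun ξ => by
    simpa [enorm_mul, ENNReal.mul_rpow_of_nonneg _ _ hs0] using
      ENNReal.rpow_add_le_add_rpow 1 ‖c * ξ‖ₑ hs0 hs1.le
  have hone_le : ∀ ξ : ℝ, 1 ≤ (1 + ‖c * ξ‖ₑ) ^ s := fun ξ => by
    simpa using ENNReal.rpow_le_rpow (le_self_add : 1 ≤ 1 + ‖c * ξ‖ₑ) hs0
  have hcs : ‖c‖ₑ ^ s ≠ ⊤ := by finiteness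
  calc _ ≤ ∫⁻ ξ, (‖𝓕 (I.indicator f) ξ‖ₑ ^ 2 +
          ‖c‖ₑ ^ s * (‖ξ‖ₑ ^ s * ‖𝓕 (I.indicator f) ξ‖ₑ ^ 2)) := by
        gcongr with ξ
        rw [← mul_assoc, ← one_add_mul]
        gcongr
        exact hweight_le ξ
    _ = (∫⁻ ξ, ‖𝓕 (I.indicator f) ξ‖ₑ ^ 2) +
          ‖c‖ₑ ^ s * ∫⁻ ξ, ‖ξ‖ₑ ^ s * ‖𝓕 (I.indicator f) ξ‖ₑ ^ 2 := by
        rw [lintegral_add_left (by fun_prop), lintegral_const_mul' _ _ hcs]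
    _ ≤ (∫⁻ ξ, ‖𝓕 f ξ‖ₑ ^ 2) + ‖c‖ₑ ^ s * (C * ∫⁻ ξ, ‖ξ‖ₑ ^ s * ‖𝓕 f ξ‖ₑ ^ 2) := by
        refine add_le_add (lintegral_enorm_fourier_indicator_sq_le hI.measurableSet hf1 hf2) ?_
        gcongr
        exact hcut I f hI hf1 hf2
    _ = (∫⁻ ξ, ‖𝓕 f ξ‖ₑ ^ 2) + C * ∫⁻ ξ, ‖c * ξ‖ₑ ^ s * ‖𝓕 f ξ‖ₑ ^ 2 := by
        simp only [enorm_mul, ENNReal.mul_rpow_of_nonneg _ _ hs0, mul_assoc]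
        rw [lintegral_const_mul' _ _ hcs, mul_left_comm]
    _ ≤ (1 + C) * ∫⁻ ξ, (1 + ‖c * ξ‖ₑ) ^ s * ‖𝓕 f ξ‖ₑ ^ 2 := by
        rw [one_add_mul]
        gcongr with ξ ξ
        · exact le_mul_of_one_le_left' (hone_le ξ)
        · exact le_add_self

end FourierCutoff

section AngularFrequency

variable {E : Type*} [NormedAddCommGroup E] {s : ℝ}

/-- The Fourier transform in angular frequency, `∫ e^{-itτ} f(t) dt`. Mathlib's `𝓕` uses the
character `e^{-2πitτ}`. -/
noncomputable def angularFourier [NormedSpace ℂ E] (f : ℝ → E) (τ : ℝ) : E :=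
  ∫ t : ℝ, Complex.exp (-Complex.I * t * τ) • f t

theorem angularFourier_eq_fourier [NormedSpace ℂ E] (f : ℝ → E) (τ : ℝ) :
    angularFourier f τ = 𝓕 f ((2 * Real.pi)⁻¹ * τ) := by
  rw [Real.fourier_real_eq_integral_exp_smul, angularFourier]
  congr! 4 with t
  push_cast
  field_simp

theorem lintegral_mul_enorm_angularFourier_sq [NormedSpace ℂ E] (w : ℝ → ℝ≥0∞) (f : ℝ → E) :
    ∫⁻ τ, w τ * ‖angularFourier f τ‖ₑ ^ 2 =
      ENNReal.ofReal (2 * Real.pi) * ∫⁻ ξ, w (2 * Real.pi * ξ) * ‖𝓕 f ξ‖ₑ ^ 2 := by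
  have hπ : 0 < 2 * Real.pi := Real.two_pi_pos
  have hscale := lintegral_comp_mul_left (inv_ne_zero hπ.ne')
    fun ξ => w (2 * Real.pi * ξ) * ‖𝓕 f ξ‖ₑ ^ 2
  rw [inv_inv, abs_of_pos hπ] at hscale
  rw [← hscale]
  simp only [angularFourier_eq_fourier, mul_inv_cancel_left₀ hπ.ne']

variable (E) in
theorem exists_lintegral_one_add_rpow_mul_angularFourier_indicator_le [InnerProductSpace ℂ E]
    [CompleteSpace E] (hs0 : 0 ≤ s) (hs1 : s < 1) :
    ∃ C : ℝ≥0∞, C ≠ ⊤ ∧ ∀ (I : Set ℝ) (f : ℝ → E), I.OrdConnected → Integrable f → MemLp f 2 →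
      ∫⁻ τ, (1 + ‖τ‖ₑ) ^ s * ‖angularFourier (I.indicator f) τ‖ₑ ^ 2 ≤
        C * ∫⁻ τ, (1 + ‖τ‖ₑ) ^ s * ‖angularFourier f τ‖ₑ ^ 2 := by
  obtain ⟨C, hC, hcut⟩ :=
    exists_lintegral_one_add_rpow_mul_fourier_indicator_le E (2 * Real.pi) hs0 hs1
  refine ⟨C, hC, fun I f hI hf1 hf2 => ?_⟩
  rw [lintegral_mul_enorm_angularFourier_sq fun τ => (1 + ‖τ‖ₑ) ^ s,
    lintegral_mul_enorm_angularFourier_sq fun τ => (1 + ‖τ‖ₑ) ^ s, mul_left_comm]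
  gcongr
  exact hcut I f hI hf1 hf2

theorem integrable_one_add_norm_rpow_mul_norm_sq {V : Type*} [NormedAddCommGroup V]
    [NormedSpace ℝ V] [MeasurableSpace V] [BorelSpace V] [SecondCountableTopology V]
    [NormedSpace ℝ E] (μ : Measure V) [μ.HasTemperateGrowth] (s : ℝ) (φ : 𝓢(V, E)) :
    Integrable (fun x => (1 + ‖x‖) ^ s * ‖φ x‖ ^ 2) μ := by
  obtain ⟨k, hk⟩ := exists_nat_ge s
  set M : ℝ := 2 ^ k * ((Finset.Iic (k, 0)).sup fun m => SchwartzMap.seminorm ℝ m.1 m.2) φ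
  have hM : ∀ x, (1 + ‖x‖) ^ k * ‖φ x‖ ≤ M := fun x => by
    simpa only [norm_iteratedFDeriv_zero] using
      SchwartzMap.one_add_le_sup_seminorm_apply (𝕜 := ℝ) (m := (k, 0)) le_rfl le_rfl φ x
  have hcont : Continuous fun x : V => (1 + ‖x‖) ^ s :=
    .rpow_const (by fun_prop) fun x => .inl (by positivity)
  refine (φ.integrable.norm.const_mul M).mono'
    (hcont.mul (φ.continuous.norm.pow 2)).aestronglyMeasurable (.of_forall fun x => ?_)
  rw [Real.norm_of_nonneg (by positivity)]
  calc (1 + ‖x‖) ^ s * ‖φ x‖ ^ 2 ≤ (1 + ‖x‖) ^ (k : ℝ) * ‖φ x‖ ^ 2 := by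
        gcongr
        simp
    _ = (1 + ‖x‖) ^ k * ‖φ x‖ * ‖φ x‖ := by rw [Real.rpow_natCast]; ring
    _ ≤ M * ‖φ x‖ := by gcongr; exact hM x

theorem integrable_one_add_abs_rpow_mul_norm_angularFourier_sq [NormedSpace ℂ E] (s : ℝ)
    (f : 𝓢(ℝ, E)) : Integrable fun τ => (1 + |τ|) ^ s * ‖angularFourier f τ‖ ^ 2 := by
  have hc : (2 * Real.pi)⁻¹ ≠ 0 := inv_ne_zero Real.two_pi_pos.ne'
  set φ : 𝓢(ℝ, E) := SchwartzMap.compCLMOfContinuousLinearEquiv ℂ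
    (ContinuousLinearEquiv.smulLeft (Units.mk0 _ hc)) (𝓕 f)
  have hφ : ∀ τ, angularFourier f τ = φ τ := fun τ => by
    rw [angularFourier_eq_fourier, ← SchwartzMap.fourier_coe]
    rfl
  simp only [hφ]
  exact integrable_one_add_norm_rpow_mul_norm_sq volume s φ

theorem integral_le_toReal_mul_integral {α : Type*} [MeasurableSpace α] {μ : Measure α}
    {f g : α → ℝ} (hg : Integrable g μ) (hg0 : 0 ≤ g) {C : ℝ≥0∞} (hC : C ≠ ⊤)
    (hfg : ∫⁻ x, ‖f x‖ₑ ∂μ ≤ C * ∫⁻ x, ‖g x‖ₑ ∂μ) :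
    ∫ x, f x ∂μ ≤ C.toReal * ∫ x, g x ∂μ := by
  have hnorm : ∫⁻ x, ‖g x‖ₑ ∂μ = ENNReal.ofReal (∫ x, g x ∂μ) := by
    rw [← ofReal_integral_norm_eq_lintegral_enorm hg]
    simp only [Real.norm_of_nonneg (hg0 _)]
  have hbound := (enorm_integral_le_lintegral_enorm f).trans hfg
  rw [hnorm, ← ofReal_norm] at hbound
  have hreal := ENNReal.toReal_mono (by finiteness) hbound
  rw [ENNReal.toReal_ofReal (norm_nonneg _), ENNReal.toReal_mul,
    ENNReal.toReal_ofReal (integral_nonneg hg0)] at hreal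
  exact (Real.le_norm_self _).trans hreal

theorem enorm_one_add_abs_rpow_mul_norm_sq (hs : 0 ≤ s) (τ : ℝ) (z : E) :
    ‖(1 + |τ|) ^ s * ‖z‖ ^ 2‖ₑ = (1 + ‖τ‖ₑ) ^ s * ‖z‖ₑ ^ 2 := by
  rw [enorm_mul, enorm_pow, enorm_norm, Real.enorm_rpow_of_nonneg (by positivity) hs,
    Real.enorm_of_nonneg (by positivity), ENNReal.ofReal_add zero_le_one (abs_nonneg τ),
    ENNReal.ofReal_one, ← Real.norm_eq_abs, ofReal_norm]

end AngularFrequency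

theorem stmt_14_general (E : Type*) [NormedAddCommGroup E] [InnerProductSpace ℂ E]
    [CompleteSpace E] {b : ℝ} (hb0 : 0 ≤ b) (hb : b < 1 / 2) :
    ∃ C : ℝ, 0 < C ∧ ∀ (I : Set ℝ) (f : ℝ → E), I.OrdConnected → Integrable f → MemLp f 2 →
      Integrable (fun τ => (1 + |τ|) ^ (2 * b) * ‖angularFourier f τ‖ ^ 2) →
        ∫ τ, (1 + |τ|) ^ (2 * b) * ‖angularFourier (I.indicator f) τ‖ ^ 2 ≤
          C * ∫ τ, (1 + |τ|) ^ (2 * b) * ‖angularFourier f τ‖ ^ 2 := by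
  have hs0 : 0 ≤ 2 * b := by linarith
  obtain ⟨C, hC, hcut⟩ :=
    exists_lintegral_one_add_rpow_mul_angularFourier_indicator_le E hs0 (by linarith)
  refine ⟨(C + 1).toReal, ENNReal.toReal_pos (by simp) (by finiteness),
    fun I f hI hf1 hf2 hintegrable => ?_⟩
  refine integral_le_toReal_mul_integral hintegrable (fun τ => by positivity) (by finiteness) ?_
  simp only [enorm_one_add_abs_rpow_mul_norm_sq hs0]
  exact (hcut I f hI hf1 hf2).trans (by gcongr; exact le_self_add)

/-- Multiplication by a sharp time cutoff is bounded on `H^b(ℝ)` for `0 ≤ b < 1/2`,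
uniformly in the interval: with `𝓕f(τ) = ∫ e^{-itτ} f(t) dt`,
`∫ (1+|τ|)^{2b} |𝓕(χ_{[a₁,a₂]} f)(τ)|² dτ ≤ C ∫ (1+|τ|)^{2b} |𝓕f(τ)|² dτ`. -/
theorem stmt_14 (b : ℝ) (hb0 : 0 ≤ b) (hb : b < 1/2) :
    ∃ C : ℝ, 0 < C ∧
      ∀ (a₁ a₂ : ℝ) (f : SchwartzMap ℝ ℂ),
        (∫ τ : ℝ, (1 + |τ|) ^ (2 * b) *
            ‖∫ t : ℝ, Complex.exp (-Complex.I * t * τ) *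
              Set.indicator (Set.Icc a₁ a₂) (fun s => f s) t‖ ^ 2)
          ≤ C * ∫ τ : ℝ, (1 + |τ|) ^ (2 * b) *
              ‖∫ t : ℝ, Complex.exp (-Complex.I * t * τ) * f t‖ ^ 2 := by
  obtain ⟨C, hC, hcut⟩ := stmt_14_general ℂ hb0 hb
  exact ⟨C, hC, fun a₁ a₂ f => hcut (Set.Icc a₁ a₂) f Set.ordConnected_Icc f.integrable (f.memLp 2)
    (integrable_one_add_abs_rpow_mul_norm_angularFourier_sq (2 * b) f)⟩
end

section
/- For s ∈ ℝ, b ∈ [0, 1/2) and ε > 0 there exists a constant C > 0 such that for every δ ∈ (0, 1] and every measurable F : ℤ × ℝ → ℂ with ‖F‖_{X^{s,1/2}} < ∞, the function G(n, τ) = (1/2π) ∫_ℝ K_δ(τ − σ) F(n, σ) dσ satisfies ‖G‖_{X^{s,b}} ≤ C δ^{1/2 − b − ε} ‖F‖_{X^{s,1/2}}, where K_δ(τ) = 2 sin(δτ)/τ is the Fourier transform of the indicator function of [−δ, δ]. -/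
open MeasureTheory
open scoped ENNReal

/-- The Bourgain norm `‖F‖_{X^{s,b}}` of `F : ℤ × ℝ → ℂ` (given on the Fourier side):
`( Σ_n ∫ (1+|n|)^{2s} (1+|τ-n²|)^{2b} |F(n,τ)|² dτ )^{1/2}`, valued in `ℝ≥0∞`. -/
noncomputable def XNorm (s b : ℝ) (F : ℤ → ℝ → ℂ) : ℝ≥0∞ :=
  (∑' n : ℤ, ∫⁻ τ : ℝ, ENNReal.ofReal
      ((1 + |(n : ℝ)|) ^ (2 * s) * (1 + |τ - (n : ℝ) ^ 2|) ^ (2 * b) * ‖F n τ‖ ^ 2))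
    ^ ((1 : ℝ) / 2)

/-!
The kernel satisfies `|K_δ(x)| ≤ 2 δ` and `|K_δ(x)| ≤ 2 / |x|`; interpolating these with exponent
`θ` extracts `δ ^ θ` at the price of the weaker decay `⟨x⟩ ^ (θ - 1)`. On each fibre `n`,
convolution with `⟨x⟩ ^ (θ - 1)` is bounded from `L²(⟨τ - n²⟩ ^ (2c) dτ)` to
`L²(⟨τ - n²⟩ ^ (2b) dτ)`, uniformly in `n`, by a weighted Schur test, as long as `θ < c - b`. The
loss `ε` comes from this strict inequality.
-/

open scoped NNReal

lemma le_rpow_mul_rpow_one_sub {t x y θ : ℝ} (ht : 0 ≤ t) (hx : t ≤ x) (hy : t ≤ y)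
    (hθ₀ : 0 ≤ θ) (hθ₁ : θ ≤ 1) : t ≤ x ^ θ * y ^ (1 - θ) := by
  have hθ : 0 ≤ 1 - θ := sub_nonneg.2 hθ₁
  calc t = t ^ θ * t ^ (1 - θ) := by
        rw [← Real.rpow_add_of_nonneg ht hθ₀ hθ, add_sub_cancel, Real.rpow_one]
    _ ≤ x ^ θ * y ^ (1 - θ) := by
        have hx₀ : 0 ≤ x := ht.trans hx
        gcongr

/-- The Japanese-bracket weight `⟨x⟩ ^ r` with `⟨x⟩ = 1 + ‖x‖`, valued in `ℝ≥0∞` so that it can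
serve as a weight in lower Lebesgue integrals. -/
noncomputable def bracketWeight {E : Type*} [NormedAddCommGroup E] (r : ℝ) (x : E) : ℝ≥0∞ :=
  ENNReal.ofReal ((1 + ‖x‖) ^ r)

namespace bracketWeight

variable {E : Type*} [NormedAddCommGroup E]

lemma ne_zero (r : ℝ) (x : E) : bracketWeight r x ≠ 0 :=
  (ENNReal.ofReal_pos.2 (by positivity)).ne'

lemma ne_top (r : ℝ) (x : E) : bracketWeight r x ≠ ⊤ :=
  ENNReal.ofReal_ne_top

@[fun_prop]
lemma measurable [MeasurableSpace E] [OpensMeasurableSpace E] (r : ℝ) :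
    Measurable (bracketWeight r : E → ℝ≥0∞) := by
  unfold bracketWeight
  fun_prop

lemma zero_exponent (x : E) : bracketWeight 0 x = 1 := by
  simp [bracketWeight]

lemma add_exponent (r t : ℝ) (x : E) :
    bracketWeight (r + t) x = bracketWeight r x * bracketWeight t x := by
  rw [bracketWeight, bracketWeight, bracketWeight, Real.rpow_add (by positivity),
    ENNReal.ofReal_mul (by positivity)]

lemma neg_exponent (r : ℝ) (x : E) : bracketWeight (-r) x = (bracketWeight r x)⁻¹ := by
  rw [bracketWeight, bracketWeight, Real.rpow_neg (by positivity),
    ENNReal.ofReal_inv_of_pos (by positivity)]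

lemma sub_rev (r : ℝ) (x y : E) : bracketWeight r (x - y) = bracketWeight r (y - x) := by
  rw [bracketWeight, bracketWeight, norm_sub_rev]

lemma le_of_nonpos {r : ℝ} (hr : r ≤ 0) {x y : E} (hxy : ‖x‖ ≤ ‖y‖) :
    bracketWeight r y ≤ bracketWeight r x :=
  ENNReal.ofReal_le_ofReal <|
    Real.rpow_le_rpow_of_nonpos (by positivity) (by linarith) hr

lemma neg_le_two_rpow_mul_sub {a : ℝ} (ha : 0 ≤ a) {x y : E} (hxy : ‖x‖ ≤ ‖y‖) :
    bracketWeight (-a) y ≤ ENNReal.ofReal (2 ^ a) * bracketWeight (-a) (x - y) := by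
  have hsub : 1 + ‖x - y‖ ≤ 2 * (1 + ‖y‖) := by linarith [norm_sub_le x y]
  rw [bracketWeight, bracketWeight, ← ENNReal.ofReal_mul (by positivity)]
  refine ENNReal.ofReal_le_ofReal ?_
  calc (1 + ‖y‖) ^ (-a) = 2 ^ a * (2 * (1 + ‖y‖)) ^ (-a) := by
        rw [Real.mul_rpow (by norm_num) (by positivity), ← mul_assoc,
          ← Real.rpow_add (by norm_num), add_neg_cancel, Real.rpow_zero, one_mul]
    _ ≤ 2 ^ a * (1 + ‖x - y‖) ^ (-a) := by
        gcongr 2 ^ a * ?_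
        exact Real.rpow_le_rpow_of_nonpos (by positivity) hsub (by linarith)

lemma mul_le_of_norm_le {p q a : ℝ} (ha : 0 ≤ a) (haq : a ≤ q) {x y : E} (hxy : ‖x‖ ≤ ‖y‖) :
    bracketWeight (-p) x * bracketWeight (-q) y ≤
      ENNReal.ofReal (2 ^ a) * bracketWeight (-a) (x - y) * bracketWeight (-(p + q - a)) x :=
  calc bracketWeight (-p) x * bracketWeight (-q) y
      = bracketWeight (-p) x * (bracketWeight (-(q - a)) y * bracketWeight (-a) y) := by
        rw [← add_exponent]
        ring_nf
    _ ≤ bracketWeight (-p) x * (bracketWeight (-(q - a)) x *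
          (ENNReal.ofReal (2 ^ a) * bracketWeight (-a) (x - y))) := by
        gcongr
        · exact le_of_nonpos (by linarith) hxy
        · exact neg_le_two_rpow_mul_sub ha hxy
    _ = ENNReal.ofReal (2 ^ a) * bracketWeight (-a) (x - y) *
          (bracketWeight (-p) x * bracketWeight (-(q - a)) x) := by ring
    _ = _ := by
        rw [← add_exponent]
        ring_nf

lemma mul_le {p q a : ℝ} (ha : 0 ≤ a) (hap : a ≤ p) (haq : a ≤ q) (x y : E) :
    bracketWeight (-p) x * bracketWeight (-q) y ≤
      ENNReal.ofReal (2 ^ a) * bracketWeight (-a) (x - y) *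
        (bracketWeight (-(p + q - a)) x + bracketWeight (-(p + q - a)) y) := by
  rcases le_total ‖x‖ ‖y‖ with hxy | hyx
  · refine (mul_le_of_norm_le ha haq hxy).trans ?_
    gcongr
    exact le_self_add
  · rw [mul_comm, sub_rev (-a) x y, add_comm p q]
    refine (mul_le_of_norm_le ha hap hyx).trans ?_
    gcongr
    exact le_add_self

variable [NormedSpace ℝ E] [FiniteDimensional ℝ E] [MeasurableSpace E] [BorelSpace E]
  (μ : Measure E) [μ.IsAddHaarMeasure]

lemma exists_lintegral_mul_le {p q a : ℝ} (ha : 0 ≤ a) (hap : a ≤ p) (haq : a ≤ q)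
    (hdim : Module.finrank ℝ E < p + q - a) :
    ∃ C : ℝ≥0, ∀ u v : E,
      ∫⁻ x, bracketWeight (-p) (x - u) * bracketWeight (-q) (x - v) ∂μ ≤
        C * bracketWeight (-a) (u - v) := by
  set r := p + q - a
  set I := ∫⁻ x : E, bracketWeight (-r) x ∂μ
  have hI : I ≠ ⊤ := (finite_integral_one_add_norm hdim).ne
  have hshift (u : E) : ∫⁻ x, bracketWeight (-r) (x - u) ∂μ = I :=
    lintegral_sub_right_eq_self (bracketWeight (-r)) u
  refine ⟨(ENNReal.ofReal (2 ^ a) * (I + I)).toNNReal, fun u v => ?_⟩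
  rw [ENNReal.coe_toNNReal (by finiteness)]
  calc ∫⁻ x, bracketWeight (-p) (x - u) * bracketWeight (-q) (x - v) ∂μ
      ≤ ∫⁻ x, ENNReal.ofReal (2 ^ a) * bracketWeight (-a) (u - v) *
          (bracketWeight (-r) (x - u) + bracketWeight (-r) (x - v)) ∂μ := by
        refine lintegral_mono fun x => (mul_le ha hap haq _ _).trans_eq ?_
        rw [sub_sub_sub_cancel_left, sub_rev]
    _ = ENNReal.ofReal (2 ^ a) * bracketWeight (-a) (u - v) * (I + I) := by
        rw [lintegral_const_mul _ (by fun_prop), lintegral_add_left (by fun_prop), hshift, hshift]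
    _ = ENNReal.ofReal (2 ^ a) * (I + I) * bracketWeight (-a) (u - v) := by ring

end bracketWeight

section SchurTest

variable {α β : Type*} [MeasurableSpace α] [MeasurableSpace β]

lemma sq_lintegral_mul_le_lintegral_mul_inv_mul {ν : Measure β} {k w f : β → ℝ≥0∞}
    (hk : AEMeasurable k ν) (hw : AEMeasurable w ν) (hf : AEMeasurable f ν)
    (hw0 : ∀ y, w y ≠ 0) (hwtop : ∀ y, w y ≠ ⊤) :
    (∫⁻ y, k y * f y ∂ν) ^ 2 ≤
      (∫⁻ y, k y * (w y)⁻¹ ∂ν) * ∫⁻ y, k y * (w y * f y ^ 2) ∂ν := by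
  have hsplit (y : β) : k y * f y =
      (k y * (w y)⁻¹) ^ (1 / 2 : ℝ) * (k y * (w y * f y ^ 2)) ^ (1 / 2 : ℝ) := by
    have hprod : k y * (w y)⁻¹ * (k y * (w y * f y ^ 2)) = (k y * f y) ^ (2 : ℝ) := by
      calc k y * (w y)⁻¹ * (k y * (w y * f y ^ 2)) = (w y)⁻¹ * w y * (k y * f y) ^ 2 := by ring
        _ = (k y * f y) ^ (2 : ℝ) := by
          rw [ENNReal.inv_mul_cancel (hw0 y) (hwtop y), one_mul, ENNReal.rpow_two]
    rw [← ENNReal.mul_rpow_of_nonneg _ _ (by norm_num), hprod, ← ENNReal.rpow_mul]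
    norm_num
  have hHolder : ∫⁻ y, k y * f y ∂ν ≤
      (∫⁻ y, k y * (w y)⁻¹ ∂ν) ^ (1 / 2 : ℝ) *
        (∫⁻ y, k y * (w y * f y ^ 2) ∂ν) ^ (1 / 2 : ℝ) := by
    simp_rw [hsplit]
    exact ENNReal.lintegral_mul_norm_pow_le (by fun_prop) (by fun_prop)
      (by norm_num) (by norm_num) (by norm_num)
  rw [← ENNReal.mul_rpow_of_nonneg _ _ (by norm_num)] at hHolder
  rw [← ENNReal.rpow_two]
  exact (ENNReal.le_rpow_inv_iff (by norm_num)).1 (by simpa using hHolder)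

theorem lintegral_mul_sq_le_of_schur {μ : Measure α} {ν : Measure β} [SFinite μ] [SFinite ν]
    {k : α → β → ℝ≥0∞} {u v : α → ℝ≥0∞} {w f : β → ℝ≥0∞} {C : ℝ≥0∞}
    (hk : Measurable (Function.uncurry k)) (hu : Measurable u) (hv : Measurable v)
    (hw : Measurable w) (hf : AEMeasurable f ν) (hw0 : ∀ y, w y ≠ 0) (hwtop : ∀ y, w y ≠ ⊤)
    (hrow : ∀ x, ∫⁻ y, k x y * (w y)⁻¹ ∂ν ≤ v x)
    (hcol : ∀ y, ∫⁻ x, u x * v x * k x y ∂μ ≤ C) :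
    ∫⁻ x, u x * (∫⁻ y, k x y * f y ∂ν) ^ 2 ∂μ ≤ C * ∫⁻ y, w y * f y ^ 2 ∂ν := by
  have _ : AEMeasurable (fun z : α × β => f z.2) (μ.prod ν) := hf.comp_snd
  calc ∫⁻ x, u x * (∫⁻ y, k x y * f y ∂ν) ^ 2 ∂μ
      ≤ ∫⁻ x, u x * (v x * ∫⁻ y, k x y * (w y * f y ^ 2) ∂ν) ∂μ := by
        gcongr with x
        refine (sq_lintegral_mul_le_lintegral_mul_inv_mul
          hk.of_uncurry_left.aemeasurable hw.aemeasurable hf hw0 hwtop).trans ?_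
        gcongr
        exact hrow x
    _ = ∫⁻ x, ∫⁻ y, u x * v x * k x y * (w y * f y ^ 2) ∂ν ∂μ := by
        refine lintegral_congr fun x => ?_
        have : Measurable (k x) := hk.of_uncurry_left
        rw [← mul_assoc, ← lintegral_const_mul'' _ (by fun_prop)]
        simp only [mul_assoc]
    _ = ∫⁻ y, ∫⁻ x, u x * v x * k x y * (w y * f y ^ 2) ∂μ ∂ν := by
        refine lintegral_lintegral_swap ?_
        simp only [Function.uncurry_def] at hk ⊢
        fun_prop
    _ ≤ ∫⁻ y, C * (w y * f y ^ 2) ∂ν := by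
        gcongr with y
        have : Measurable fun x => k x y := hk.of_uncurry_right
        rw [lintegral_mul_const _ (by fun_prop)]
        gcongr
        exact hcol y
    _ = C * ∫⁻ y, w y * f y ^ 2 ∂ν := lintegral_const_mul'' _ (by fun_prop)

end SchurTest

theorem exists_lintegral_bracketWeight_mul_sq_le {E : Type*} [NormedAddCommGroup E]
    [NormedSpace ℝ E] [FiniteDimensional ℝ E] [MeasurableSpace E] [BorelSpace E]
    (μ : Measure E) [μ.IsAddHaarMeasure] {b c p : ℝ} (hcb : -c ≤ b) (hbc : b ≤ c)
    (hp : b + c ≤ p) (hdim : Module.finrank ℝ E < p + c - b) :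
    ∃ C : ℝ≥0, ∀ (m : E) (f : E → ℝ≥0∞), AEMeasurable f μ →
      ∫⁻ x, bracketWeight (2 * b) (x - m) *
          (∫⁻ y, bracketWeight (-p) (x - y) * f y ∂μ) ^ 2 ∂μ ≤
        C * ∫⁻ y, bracketWeight (2 * c) (y - m) * f y ^ 2 ∂μ := by
  -- With row bound `⟨x - m⟩ ^ (-(b + c))`, rows and columns are both governed by the same total
  -- decay `p + c - b`.
  obtain ⟨A, hA⟩ := bracketWeight.exists_lintegral_mul_le μ (p := p) (q := 2 * c) (a := b + c)
    (by linarith) hp (by linarith) (by linarith)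
  obtain ⟨B, hB⟩ := bracketWeight.exists_lintegral_mul_le μ (p := c - b) (q := p) (a := 0)
    le_rfl (by linarith) (by linarith) (by linarith)
  refine ⟨A * B, fun m f hf => ?_⟩
  refine lintegral_mul_sq_le_of_schur (v := fun x => A * bracketWeight (-(b + c)) (x - m))
    (by simp only [Function.uncurry_def]; fun_prop) (by fun_prop) (by fun_prop) (by fun_prop) hf
    (fun _ => bracketWeight.ne_zero _ _) (fun _ => bracketWeight.ne_top _ _)
    (fun x => ?_) fun y => ?_
  · simpa only [bracketWeight.sub_rev (-p) x, bracketWeight.neg_exponent (2 * c)] using hA x m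
  · have hcombine (x : E) : bracketWeight (2 * b) (x - m) *
        (A * bracketWeight (-(b + c)) (x - m)) * bracketWeight (-p) (x - y) =
        A * (bracketWeight (-(c - b)) (x - m) * bracketWeight (-p) (x - y)) := by
      rw [show -(c - b) = 2 * b + -(b + c) by ring, bracketWeight.add_exponent]
      ring
    simp_rw [hcombine]
    rw [lintegral_const_mul _ (by fun_prop), ENNReal.coe_mul]
    gcongr
    simpa only [neg_zero, bracketWeight.zero_exponent, mul_one] using hB m y

/-- The kernel `K_δ(x) = 2 sin (δ x) / x`, the Fourier transform of the indicator of `[-δ, δ]`.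
At `x = 0` its value is `0` instead of `2 δ`, which no integral sees. -/
noncomputable def timeCutoffKernel (δ x : ℝ) : ℝ :=
  2 * Real.sin (δ * x) / x

lemma abs_timeCutoffKernel_le {δ : ℝ} (hδ : 0 ≤ δ) (x : ℝ) : |timeCutoffKernel δ x| ≤ 2 * δ := by
  rw [timeCutoffKernel, abs_div, abs_mul, abs_two]
  refine div_le_of_le_mul₀ (abs_nonneg x) (by positivity) ?_
  calc 2 * |Real.sin (δ * x)| ≤ 2 * |δ * x| := by
        gcongr 2 * ?_
        exact Real.abs_sin_le_abs
    _ = 2 * δ * |x| := by rw [abs_mul, abs_of_nonneg hδ, mul_assoc]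

lemma abs_timeCutoffKernel_mul_abs_le (δ x : ℝ) : |timeCutoffKernel δ x| * |x| ≤ 2 := by
  rcases eq_or_ne x 0 with rfl | hx
  · simp
  · rw [timeCutoffKernel, ← abs_mul, div_mul_cancel₀ _ hx, abs_mul, abs_two]
    linarith [Real.abs_sin_le_one (δ * x)]

lemma enorm_timeCutoffKernel_le {δ θ : ℝ} (hδ : 0 ≤ δ) (hδ₁ : δ ≤ 1) (hθ₀ : 0 ≤ θ) (hθ₁ : θ ≤ 1)
    (x : ℝ) :
    ‖timeCutoffKernel δ x‖ₑ ≤ ENNReal.ofReal (4 * δ ^ θ) * bracketWeight (-(1 - θ)) x := by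
  have hsmall := abs_timeCutoffKernel_le hδ x
  have hdecay : |timeCutoffKernel δ x| ≤ 4 * (1 + |x|)⁻¹ := by
    rw [← div_eq_mul_inv, le_div_iff₀ (by positivity)]
    linarith [abs_timeCutoffKernel_mul_abs_le δ x]
  rw [bracketWeight, ← ENNReal.ofReal_mul (by positivity), Real.enorm_eq_ofReal_abs]
  refine ENNReal.ofReal_le_ofReal ?_
  calc |timeCutoffKernel δ x| ≤ (4 * δ) ^ θ * (4 * (1 + |x|)⁻¹) ^ (1 - θ) :=
        le_rpow_mul_rpow_one_sub (abs_nonneg _) (by linarith) hdecay hθ₀ hθ₁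
    _ = 4 ^ (θ + (1 - θ)) * δ ^ θ * (1 + |x|) ^ (-(1 - θ)) := by
        rw [Real.mul_rpow (by norm_num) hδ, Real.mul_rpow (by norm_num) (by positivity),
          Real.inv_rpow (by positivity), ← Real.rpow_neg (by positivity),
          Real.rpow_add (by norm_num)]
        ring
    _ = 4 * δ ^ θ * (1 + ‖x‖) ^ (-(1 - θ)) := by
        rw [add_sub_cancel, Real.rpow_one, Real.norm_eq_abs]

/-- Sharp truncation in time to `[-δ, δ]`, seen on the Fourier side: convolution with
`K_δ / 2π`. -/
noncomputable def timeCutoff (δ : ℝ) (f : ℝ → ℂ) (τ : ℝ) : ℂ :=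
  (1 / (2 * Real.pi)) * ∫ σ, (timeCutoffKernel δ (τ - σ) : ℂ) * f σ

lemma enorm_timeCutoff_le {δ θ : ℝ} (hδ : 0 ≤ δ) (hδ₁ : δ ≤ 1) (hθ₀ : 0 ≤ θ) (hθ₁ : θ ≤ 1)
    (f : ℝ → ℂ) (τ : ℝ) :
    ‖timeCutoff δ f τ‖ₑ ≤
      ENNReal.ofReal (4 * δ ^ θ) * ∫⁻ σ, bracketWeight (-(1 - θ)) (τ - σ) * ‖f σ‖ₑ := by
  have hpi : ‖(1 / (2 * Real.pi) : ℂ)‖ ≤ 1 := by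
    rw [norm_div, norm_one, norm_mul, Complex.norm_ofNat, Complex.norm_real,
      Real.norm_of_nonneg Real.pi_nonneg, div_le_one (by positivity)]
    linarith [Real.pi_gt_three]
  calc ‖timeCutoff δ f τ‖ₑ
      ≤ 1 * ∫⁻ σ, ‖(timeCutoffKernel δ (τ - σ) : ℂ) * f σ‖ₑ := by
        rw [timeCutoff, enorm_mul]
        gcongr
        · rw [← ofReal_norm]
          exact ENNReal.ofReal_le_one.2 hpi
        · exact enorm_integral_le_lintegral_enorm _
    _ ≤ ∫⁻ σ, ENNReal.ofReal (4 * δ ^ θ) * (bracketWeight (-(1 - θ)) (τ - σ) * ‖f σ‖ₑ) := by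
        rw [one_mul]
        gcongr with σ
        rw [enorm_mul, ← mul_assoc]
        gcongr
        rw [← ofReal_norm, Complex.norm_real, ofReal_norm]
        exact enorm_timeCutoffKernel_le hδ hδ₁ hθ₀ hθ₁ _
    _ = _ := lintegral_const_mul' _ _ ENNReal.ofReal_ne_top

theorem exists_lintegral_bracketWeight_mul_timeCutoff_sq_le {b c θ : ℝ} (hcb : -c ≤ b)
    (hc : c ≤ 1 / 2) (hθ₀ : 0 ≤ θ) (hθ : θ < c - b) :
    ∃ C : ℝ≥0, ∀ δ : ℝ, 0 ≤ δ → δ ≤ 1 → ∀ (m : ℝ) (f : ℝ → ℂ), AEMeasurable f →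
      ∫⁻ τ, bracketWeight (2 * b) (τ - m) * ‖timeCutoff δ f τ‖ₑ ^ 2 ≤
        (C * ENNReal.ofReal (δ ^ θ)) ^ 2 *
          ∫⁻ σ, bracketWeight (2 * c) (σ - m) * ‖f σ‖ₑ ^ 2 := by
  obtain ⟨D, hD⟩ := exists_lintegral_bracketWeight_mul_sq_le (volume : Measure ℝ) (p := 1 - θ)
    hcb (by linarith) (by linarith) (by rw [Module.finrank_self, Nat.cast_one]; linarith)
  refine ⟨4 * NNReal.sqrt D, fun δ hδ hδ₁ m f hf => ?_⟩
  have hconst : ((4 * NNReal.sqrt D : ℝ≥0) * ENNReal.ofReal (δ ^ θ)) ^ 2 =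
      ENNReal.ofReal (4 * δ ^ θ) ^ 2 * D := by
    have hsqrt : (NNReal.sqrt D : ℝ≥0∞) ^ 2 = D := by exact_mod_cast NNReal.sq_sqrt D
    rw [ENNReal.ofReal_mul (by norm_num), ENNReal.ofReal_ofNat, ← hsqrt]
    push_cast
    ring
  calc ∫⁻ τ, bracketWeight (2 * b) (τ - m) * ‖timeCutoff δ f τ‖ₑ ^ 2
      ≤ ∫⁻ τ, ENNReal.ofReal (4 * δ ^ θ) ^ 2 * (bracketWeight (2 * b) (τ - m) *
          (∫⁻ σ, bracketWeight (-(1 - θ)) (τ - σ) * ‖f σ‖ₑ) ^ 2) := by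
        refine lintegral_mono fun τ => ?_
        rw [mul_left_comm, ← mul_pow]
        gcongr
        exact enorm_timeCutoff_le hδ hδ₁ hθ₀ (by linarith) f τ
    _ = ENNReal.ofReal (4 * δ ^ θ) ^ 2 * ∫⁻ τ, bracketWeight (2 * b) (τ - m) *
          (∫⁻ σ, bracketWeight (-(1 - θ)) (τ - σ) * ‖f σ‖ₑ) ^ 2 :=
        lintegral_const_mul' _ _ (by finiteness)
    _ ≤ ENNReal.ofReal (4 * δ ^ θ) ^ 2 *
          (D * ∫⁻ σ, bracketWeight (2 * c) (σ - m) * ‖f σ‖ₑ ^ 2) := by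
        gcongr
        exact hD m _ hf.enorm
    _ = _ := by rw [hconst, mul_assoc]

namespace XNorm

lemma eq_tsum_bracketWeight (s b : ℝ) (F : ℤ → ℝ → ℂ) :
    XNorm s b F = (∑' n : ℤ, bracketWeight (2 * s) (n : ℝ) *
      ∫⁻ τ, bracketWeight (2 * b) (τ - (n : ℝ) ^ 2) * ‖F n τ‖ₑ ^ 2) ^ (1 / 2 : ℝ) := by
  rw [XNorm]
  congr! 3 with n
  rw [← lintegral_const_mul' _ _ (bracketWeight.ne_top _ _)]
  refine lintegral_congr fun τ => ?_
  rw [ENNReal.ofReal_mul (by positivity), ENNReal.ofReal_mul (by positivity),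
    ENNReal.ofReal_pow (norm_nonneg _), ofReal_norm, mul_assoc]
  rfl

lemma le_mul_of_forall_lintegral_le {b c : ℝ} {A : ℝ≥0∞} {F G : ℤ → ℝ → ℂ} (s : ℝ)
    (h : ∀ n : ℤ, ∫⁻ τ, bracketWeight (2 * b) (τ - (n : ℝ) ^ 2) * ‖G n τ‖ₑ ^ 2 ≤
      A ^ 2 * ∫⁻ τ, bracketWeight (2 * c) (τ - (n : ℝ) ^ 2) * ‖F n τ‖ₑ ^ 2) :
    XNorm s b G ≤ A * XNorm s c F := by
  have hA : A = (A ^ 2) ^ (1 / 2 : ℝ) := by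
    rw [← ENNReal.rpow_two, ← ENNReal.rpow_mul]
    norm_num
  rw [eq_tsum_bracketWeight, eq_tsum_bracketWeight, hA,
    ← ENNReal.mul_rpow_of_nonneg _ _ (by norm_num), ← ENNReal.tsum_mul_left]
  gcongr ?_ ^ (1 / 2 : ℝ)
  refine ENNReal.tsum_le_tsum fun n => ?_
  rw [mul_left_comm]
  gcongr
  exact h n

end XNorm

theorem stmt_15_general (s : ℝ) {b c ε : ℝ} (hcb : -c ≤ b) (hbc : b < c) (hc : c ≤ 1 / 2)
    (hε : 0 < ε) :
    ∃ C : ℝ, 0 < C ∧ ∀ δ : ℝ, 0 < δ → δ ≤ 1 →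
      ∀ F : ℤ → ℝ → ℂ, (∀ n, AEMeasurable (F n)) →
        XNorm s b (fun n => timeCutoff δ (F n)) ≤
          ENNReal.ofReal (C * δ ^ (c - b - ε)) * XNorm s c F := by
  obtain ⟨θ, hθ₀, hθ, hθε⟩ : ∃ θ, 0 ≤ θ ∧ θ < c - b ∧ c - b - ε ≤ θ :=
    ⟨max 0 (c - b - ε), le_max_left _ _, max_lt (by linarith) (by linarith), le_max_right _ _⟩
  obtain ⟨C, hC⟩ := exists_lintegral_bracketWeight_mul_timeCutoff_sq_le hcb hc hθ₀ hθ
  refine ⟨C + 1, by positivity, fun δ hδ hδ₁ F hF => ?_⟩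
  have hconst : C * ENNReal.ofReal (δ ^ θ) ≤ ENNReal.ofReal ((C + 1) * δ ^ (c - b - ε)) := by
    rw [← ENNReal.ofReal_coe_nnreal, ← ENNReal.ofReal_mul C.coe_nonneg]
    have hpow : δ ^ θ ≤ δ ^ (c - b - ε) := Real.rpow_le_rpow_of_exponent_ge hδ hδ₁ hθε
    gcongr
    exact le_add_of_nonneg_right zero_le_one
  calc XNorm s b (fun n => timeCutoff δ (F n))
      ≤ C * ENNReal.ofReal (δ ^ θ) * XNorm s c F :=
        XNorm.le_mul_of_forall_lintegral_le s fun n => hC δ hδ.le hδ₁ _ _ (hF n)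
    _ ≤ _ := by gcongr

/-- Time localization gain in Bourgain spaces: for `b < 1/2` and `ε > 0`, convolving in `τ`
with `K_δ(τ) = 2 sin(δτ)/τ` (the Fourier transform of `χ_{[-δ,δ]}`), i.e. sharply
truncating in time to `[-δ, δ]`, gains `δ^{1/2 - b - ε}`:
`‖G‖_{X^{s,b}} ≤ C δ^{1/2-b-ε} ‖F‖_{X^{s,1/2}}` where `G(n,τ) = (1/2π)(K_δ * F(n,·))(τ)`. -/
theorem stmt_15 (s b ε : ℝ) (hb0 : 0 ≤ b) (hb : b < 1/2) (hε : 0 < ε) :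
    ∃ C : ℝ, 0 < C ∧
      ∀ δ : ℝ, 0 < δ → δ ≤ 1 →
        ∀ F : ℤ → ℝ → ℂ, Measurable (fun p : ℤ × ℝ => F p.1 p.2) →
          XNorm s (1/2) F ≠ ⊤ →
          ∀ G : ℤ → ℝ → ℂ,
            (∀ n τ, G n τ = (1 / (2 * Real.pi)) *
              ∫ σ' : ℝ, ((2 * Real.sin (δ * (τ - σ')) / (τ - σ') : ℝ) : ℂ) * F n σ') →
            XNorm s b G ≤ ENNReal.ofReal (C * δ ^ (1/2 - b - ε)) * XNorm s (1/2) F := by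
  obtain ⟨C, hC, hbound⟩ := stmt_15_general s (c := 1 / 2) (by linarith) hb le_rfl hε
  refine ⟨C, hC, fun δ hδ hδ₁ F hF _ G hG => ?_⟩
  obtain rfl : G = fun n => timeCutoff δ (F n) := funext₂ hG
  exact hbound δ hδ hδ₁ F fun n => (hF.comp measurable_prodMk_left).aemeasurable
end
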